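/- arXiv:1004.2452 — 2 statements merged into one kernel-verified Lean document; each statement's English description precedes it below -/
import Mathlib

section
/- Let K be a quantum symmetric kernel of order r on (ℂ^d)^{⊗r} with θ := Tr(ρ^{⊗r} K), and for 0 ≤ l ≤ r let K_l := P_{{1,...,l}}(K) be its Hoeffding projection, regarded as a selfadjoint operator on (ℂ^d)^{⊗l} tensored with the identity (so K_0 = θ·1). Then for every n ≥ r: (i) U_n = Σ_{l=0}^{r} C(r,l) U_{n,l}, where U_{n,l} is the quantum U-statistic of order l with kernel K_l; (ii) for 1 ≤ l ≠ l' ≤ r, U_{n,l} and U_{n,l'} are orthogonal in L²(ρ^{⊗n}); (iii) Var_ρ(U_n) := Tr(ρ^{⊗n} U_n²) − θ² = Σ_{l=1}^{r} C(r,l)^2 C(n,l)^{-1} Tr(ρ^{⊗l} K_l²). Consequently, if K_1 = ... = K_{c−1} = 0 for some 1 ≤ c ≤ r, then there is a constant C with Var_ρ(U_n) ≤ C n^{−c} for all n ≥ r. -/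
open scoped BigOperators
open Matrix
open scoped ComplexOrder

/-- The tensor product of a family of `d × d` matrices, as a matrix indexed by
multi-indices `Fin n → Fin d`. -/
noncomputable def tensorFam {d n : ℕ} (M : Fin n → Matrix (Fin d) (Fin d) ℂ) :
    Matrix (Fin n → Fin d) (Fin n → Fin d) ℂ :=
  Matrix.of fun x y => ∏ i, M i (x i) (y i)

/-- The quantum conditional expectation `E(K | A)` with respect to `ρ^{⊗n}`. -/
noncomputable def qCondExp {d n : ℕ} (ρ : Matrix (Fin d) (Fin d) ℂ) (A : Finset (Fin n))
    (K : Matrix (Fin n → Fin d) (Fin n → Fin d) ℂ) :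
    Matrix (Fin n → Fin d) (Fin n → Fin d) ℂ :=
  Matrix.of fun x y =>
    (∏ j ∈ Aᶜ, if x j = y j then (1 : ℂ) else 0) *
      ∑ s : Fin n → Fin d, ∑ t : Fin n → Fin d,
        (if ∀ i ∈ A, s i = x i ∧ t i = y i then (1 : ℂ) else 0) *
          (∏ j ∈ Aᶜ, ρ (t j) (s j)) * K s t

/-- The ampliation `K^{(β)}` of a kernel `K` of order `r` to `(ℂ^d)^{⊗n}`: `K` acts on the
tensor slots in `β` (enumerated in increasing order) and the identity acts elsewhere. -/
noncomputable def ampl {d r n : ℕ} (K : Matrix (Fin r → Fin d) (Fin r → Fin d) ℂ)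
    (β : Finset (Fin n)) (hβ : β.card = r) :
    Matrix (Fin n → Fin d) (Fin n → Fin d) ℂ :=
  Matrix.of fun x y =>
    K (fun i => x ((β.orderIsoOfFin hβ i : Fin n)))
        (fun i => y ((β.orderIsoOfFin hβ i : Fin n))) *
      ∏ j ∈ βᶜ, if x j = y j then (1 : ℂ) else 0

/-- The quantum U-statistic `U_n = C(n,r)⁻¹ Σ_β K^{(β)}`. -/
noncomputable def qUstat {d r : ℕ} (K : Matrix (Fin r → Fin d) (Fin r → Fin d) ℂ)
    (n : ℕ) : Matrix (Fin n → Fin d) (Fin n → Fin d) ℂ :=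
  (n.choose r : ℂ)⁻¹ •
    ∑ β ∈ (Finset.powersetCard r (Finset.univ : Finset (Fin n))).attach,
      ampl K β.1 (Finset.mem_powersetCard.mp β.2).2

/-- The `l`-th Hoeffding component `K_l := P_{{1,...,l}} K` of a kernel of order `r`,
regarded as a kernel of order `l` (the remaining slots carry the identity). -/
noncomputable def hoefK {d r : ℕ} [NeZero d] (ρ : Matrix (Fin d) (Fin d) ℂ)
    (K : Matrix (Fin r → Fin d) (Fin r → Fin d) ℂ) (l : ℕ) :
    Matrix (Fin l → Fin d) (Fin l → Fin d) ℂ :=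
  Matrix.of fun x y =>
    (∑ B ∈ (Finset.univ.filter fun i : Fin r => (i : ℕ) < l).powerset,
      ((-1 : ℂ) ^ ((Finset.univ.filter fun i : Fin r => (i : ℕ) < l).card - B.card)) •
        qCondExp ρ B K)
      (fun i => if h : (i : ℕ) < l then x ⟨i, h⟩ else 0)
      (fun i => if h : (i : ℕ) < l then y ⟨i, h⟩ else 0)

namespace QuantumUstat

open Finset

variable {d r l n : ℕ}

/-- Operators on `(ℂ^d)^{⊗n}`. -/
abbrev TMat (d n : ℕ) := Matrix (Fin n → Fin d) (Fin n → Fin d) ℂ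

/-! ### Product tensors -/

theorem tensorFam_apply (M : Fin n → Matrix (Fin d) (Fin d) ℂ) (x y : Fin n → Fin d) :
    tensorFam M x y = ∏ i, M i (x i) (y i) := rfl

theorem tensorFam_mul (M N : Fin n → Matrix (Fin d) (Fin d) ℂ) :
    tensorFam M * tensorFam N = tensorFam fun i => M i * N i := by
  ext x y
  simp only [tensorFam, Matrix.mul_apply, of_apply, Fintype.prod_sum, prod_mul_distrib]

theorem trace_tensorFam (M : Fin n → Matrix (Fin d) (Fin d) ℂ) :
    (tensorFam M).trace = ∏ i, (M i).trace := by
  simp only [tensorFam, Matrix.trace, diag_apply, of_apply, Fintype.prod_sum]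

theorem conjTranspose_tensorFam (M : Fin n → Matrix (Fin d) (Fin d) ℂ) :
    (tensorFam M)ᴴ = tensorFam fun i => (M i)ᴴ := by
  ext x y
  simp [tensorFam, Matrix.conjTranspose_apply]

theorem single_eq_tensorFam (s t : Fin n → Fin d) :
    Matrix.single s t (1 : ℂ) = tensorFam fun i => Matrix.single (s i) (t i) 1 := by
  ext x y
  simp only [tensorFam_apply, Matrix.single_apply, Fintype.prod_boole, forall_and,
    funext_iff]

theorem tensor_induction {p : TMat d n → Prop} (htensor : ∀ M, p (tensorFam M))
    (hadd : ∀ X Y, p X → p Y → p (X + Y)) (hsmul : ∀ (c : ℂ) X, p X → p (c • X))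
    (X : TMat d n) : p X := by
  have zero : p 0 := by simpa using hsmul 0 _ (htensor fun _ => 0)
  rw [Matrix.matrix_eq_sum_single X]
  refine Finset.sum_induction _ p hadd zero fun s _ =>
    Finset.sum_induction _ p hadd zero fun t _ => ?_
  rw [← mul_one (X s t), ← smul_eq_mul, ← Matrix.smul_single, single_eq_tensorFam]
  exact hsmul _ _ (htensor _)

theorem tensor_ext {V : Type*} [AddCommMonoid V] [Module ℂ V] {f g : TMat d n →ₗ[ℂ] V}
    (h : ∀ M, f (tensorFam M) = g (tensorFam M)) : f = g :=
  LinearMap.ext fun X => tensor_induction (p := fun X => f X = g X) h (fun X Y hX hY => by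
    rw [map_add, map_add, hX, hY]) (fun c X hX => by rw [map_smul, map_smul, hX]) X

/-! ### Expectations and Hoeffding projections -/

/-- The bilinear form `(X, Y) ↦ Tr(ρ^{⊗n} X Y)`. -/
noncomputable def corr (ρ : Matrix (Fin d) (Fin d) ℂ) (n : ℕ) :
    TMat d n →ₗ[ℂ] TMat d n →ₗ[ℂ] ℂ :=
  LinearMap.mk₂ ℂ (fun X Y => ((tensorFam fun _ : Fin n => ρ) * (X * Y)).trace)
    (by simp [add_mul, mul_add]) (by simp) (by simp [mul_add]) (by simp)

theorem corr_apply (ρ : Matrix (Fin d) (Fin d) ℂ) (X Y : TMat d n) :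
    corr ρ n X Y = ((tensorFam fun _ : Fin n => ρ) * (X * Y)).trace := rfl

theorem corr_tensorFam (ρ : Matrix (Fin d) (Fin d) ℂ) (M N : Fin n → Matrix (Fin d) (Fin d) ℂ) :
    corr ρ n (tensorFam M) (tensorFam N) = ∏ i, (ρ * (M i * N i)).trace := by
  rw [corr_apply, tensorFam_mul, tensorFam_mul, trace_tensorFam]

/-- `qCondExp` as a linear map. -/
noncomputable def condExpL (ρ : Matrix (Fin d) (Fin d) ℂ) (A : Finset (Fin n)) :
    TMat d n →ₗ[ℂ] TMat d n where
  toFun := qCondExp ρ A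
  map_add' X Y := by
    ext x y
    simp [qCondExp, mul_add, sum_add_distrib]
  map_smul' c X := by
    ext x y
    simp only [qCondExp, of_apply, Matrix.smul_apply, smul_eq_mul, mul_sum, RingHom.id_apply]
    exact sum_congr rfl fun s _ => sum_congr rfl fun t _ => by ring

theorem condExpL_tensorFam (ρ : Matrix (Fin d) (Fin d) ℂ) (A : Finset (Fin n))
    (M : Fin n → Matrix (Fin d) (Fin d) ℂ) :
    condExpL ρ A (tensorFam M) =
      tensorFam fun i => if i ∈ A then M i else (ρ * M i).trace • 1 := by
  ext x y
  have key : (∑ s : Fin n → Fin d, ∑ t : Fin n → Fin d,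
        (if ∀ i ∈ A, s i = x i ∧ t i = y i then (1 : ℂ) else 0) *
          (∏ j ∈ Aᶜ, ρ (t j) (s j)) * ∏ i, M i (s i) (t i)) =
      ∏ i, if i ∈ A then M i (x i) (y i) else (ρ * M i).trace := by
    have h : ∀ i, (if i ∈ A then M i (x i) (y i) else (ρ * M i).trace) =
        ∑ a, ∑ b, (if i ∈ A then (if a = x i ∧ b = y i then 1 else 0) else ρ b a) * M i a b := by
      intro i
      split_ifs with hi
      · simp [ite_and]
      · rw [Matrix.trace, Finset.sum_comm]
        simp [Matrix.mul_apply]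
    simp only [h, Fintype.prod_sum]
    refine sum_congr rfl fun s _ => sum_congr rfl fun t _ => ?_
    rw [prod_mul_distrib]
    congr 1
    rw [← prod_mul_prod_compl A]
    congr 1
    · rw [prod_congr rfl fun i hi => if_pos hi, prod_boole]
      congr
    · exact prod_congr rfl fun i hi => (if_neg (mem_compl.1 hi)).symm
  change _ * (∑ s : Fin n → Fin d, ∑ t : Fin n → Fin d, _ * ∏ i, M i (s i) (t i)) = _
  rw [key, tensorFam_apply, ← prod_mul_prod_compl A, ← prod_mul_prod_compl A, mul_left_comm,
    ← prod_mul_distrib]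
  congr 1
  · exact prod_congr rfl fun i hi => by simp [hi]
  · refine prod_congr rfl fun i hi => ?_
    simp [mem_compl.1 hi, Matrix.one_apply]

theorem condExpL_conjTranspose {ρ : Matrix (Fin d) (Fin d) ℂ} (hρ : ρ.IsHermitian)
    (A : Finset (Fin n)) (X : TMat d n) : condExpL ρ A Xᴴ = (condExpL ρ A X)ᴴ := by
  induction X using tensor_induction with
  | htensor M =>
    simp only [conjTranspose_tensorFam, condExpL_tensorFam]
    congr 1
    ext1 i
    have h : (ρ * (M i)ᴴ).trace = star (ρ * M i).trace := by
      rw [← Matrix.trace_conjTranspose, Matrix.conjTranspose_mul, hρ.eq, Matrix.trace_mul_comm]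
    split_ifs <;> simp [h]
  | hadd X Y hX hY => simp [hX, hY]
  | hsmul c X hX => simp [hX]

/-- The Hoeffding projection `P_A`. -/
noncomputable def hoefProj (ρ : Matrix (Fin d) (Fin d) ℂ) (A : Finset (Fin n)) :
    TMat d n →ₗ[ℂ] TMat d n :=
  ∑ B ∈ A.powerset, ((-1 : ℂ) ^ (A.card - B.card)) • condExpL ρ B

theorem hoefProj_conjTranspose {ρ : Matrix (Fin d) (Fin d) ℂ} (hρ : ρ.IsHermitian)
    (A : Finset (Fin n)) (X : TMat d n) : hoefProj ρ A Xᴴ = (hoefProj ρ A X)ᴴ := by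
  simp [hoefProj, condExpL_conjTranspose hρ, Matrix.conjTranspose_sum]

theorem hoefProj_tensorFam (ρ : Matrix (Fin d) (Fin d) ℂ) (A : Finset (Fin n))
    (M : Fin n → Matrix (Fin d) (Fin d) ℂ) :
    hoefProj ρ A (tensorFam M) =
      tensorFam fun i => if i ∈ A then M i - (ρ * M i).trace • 1 else (ρ * M i).trace • 1 := by
  ext x y
  simp only [hoefProj, LinearMap.sum_apply, LinearMap.smul_apply, condExpL_tensorFam,
    Matrix.sum_apply, Matrix.smul_apply, tensorFam_apply, smul_eq_mul]
  rw [← prod_mul_prod_compl A,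
    prod_congr (g := fun i => M i (x i) (y i) + -(((ρ * M i).trace • 1 : Matrix _ _ ℂ) (x i) (y i)))
      rfl fun i hi => by simp [hi, sub_eq_add_neg], prod_add, sum_mul]
  refine sum_congr rfl fun B hB => ?_
  have hBA := mem_powerset.1 hB
  rw [prod_neg, card_sdiff_of_subset hBA, ← prod_mul_prod_compl A, ← prod_sdiff hBA]
  have h1 : ∀ i ∈ B, (if i ∈ B then M i else (ρ * M i).trace • 1) (x i) (y i) =
      M i (x i) (y i) := fun i hi => by rw [if_pos hi]
  have h2 : ∀ i ∈ A \ B, (if i ∈ B then M i else (ρ * M i).trace • 1) (x i) (y i) =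
      ((ρ * M i).trace • 1 : Matrix _ _ ℂ) (x i) (y i) :=
    fun i hi => by rw [if_neg (mem_sdiff.1 hi).2]
  have h3 : ∀ i ∈ Aᶜ, (if i ∈ B then M i else (ρ * M i).trace • 1) (x i) (y i) =
      (if i ∈ A then M i - (ρ * M i).trace • 1 else (ρ * M i).trace • 1) (x i) (y i) :=
    fun i hi => by
      rw [if_neg (mem_compl.1 hi), if_neg fun h => mem_compl.1 hi (hBA h)]
  rw [prod_congr rfl h1, prod_congr rfl h2, prod_congr rfl h3]
  ring

theorem sum_hoefProj (ρ : Matrix (Fin d) (Fin d) ℂ) (X : TMat d n) :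
    ∑ A, hoefProj ρ A X = X := by
  rw [← LinearMap.sum_apply]
  refine LinearMap.congr_fun (tensor_ext (g := LinearMap.id) fun M => ?_) X
  ext x y
  simp only [LinearMap.sum_apply, hoefProj_tensorFam, Matrix.sum_apply, LinearMap.id_apply,
    tensorFam_apply]
  rw [prod_congr (g := fun i => (M i - (ρ * M i).trace • 1) (x i) (y i) +
    ((ρ * M i).trace • 1 : Matrix _ _ ℂ) (x i) (y i)) rfl fun i _ => by simp, Fintype.prod_add]
  refine sum_congr rfl fun A _ => ?_
  rw [← prod_mul_prod_compl A]
  congr 1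
  · exact prod_congr rfl fun i hi => by rw [if_pos hi]
  · exact prod_congr rfl fun i hi => by rw [if_neg (mem_compl.1 hi)]

theorem trace_mul_sub_trace {ρ : Matrix (Fin d) (Fin d) ℂ} (hρtr : ρ.trace = 1)
    (M : Matrix (Fin d) (Fin d) ℂ) : (ρ * (M - (ρ * M).trace • 1)).trace = 0 := by
  simp [mul_sub, hρtr]

theorem corr_hoefProj_of_ne {ρ : Matrix (Fin d) (Fin d) ℂ} (hρtr : ρ.trace = 1)
    {A B : Finset (Fin n)} (hAB : A ≠ B) (X Y : TMat d n) :
    corr ρ n (hoefProj ρ A X) (hoefProj ρ B Y) = 0 := by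
  obtain ⟨i, hi⟩ : ∃ i, ¬(i ∈ A ↔ i ∈ B) := by
    by_contra! h
    exact hAB (Finset.ext h)
  suffices h : (corr ρ n).compl₁₂ (hoefProj ρ A) (hoefProj ρ B) = 0 from
    LinearMap.congr_fun (LinearMap.congr_fun h X) Y
  refine tensor_ext fun M => tensor_ext fun N => ?_
  rw [LinearMap.compl₁₂_apply, hoefProj_tensorFam, hoefProj_tensorFam, corr_tensorFam]
  refine prod_eq_zero (mem_univ i) ?_
  by_cases hA : i ∈ A <;> by_cases hB : i ∈ B
  · simp [hA, hB] at hi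
  · simp [hA, hB, trace_mul_sub_trace hρtr]
  · simp [hA, hB, trace_mul_sub_trace hρtr]
  · simp [hA, hB] at hi

/-! ### Ampliations -/

/-- The ampliation of an operator on `(ℂ^d)^{⊗r}` along an injection of the slots. -/
noncomputable def amplAlong (e : Fin r ↪ Fin n) : TMat d r →ₗ[ℂ] TMat d n where
  toFun K := Matrix.of fun x y =>
    K (x ∘ e) (y ∘ e) * ∏ j ∈ (univ.map e)ᶜ, if x j = y j then (1 : ℂ) else 0
  map_add' X Y := by
    ext x y
    simp [add_mul]
  map_smul' c X := by
    ext x y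
    simp [mul_assoc]

theorem ampl_eq_amplAlong (K : TMat d r) (β : Finset (Fin n)) (hβ : β.card = r) :
    ampl K β hβ = amplAlong (β.orderEmbOfFin hβ).toEmbedding K := by
  ext x y
  simp only [ampl, amplAlong, LinearMap.coe_mk, AddHom.coe_mk, of_apply]
  rw [Finset.map_orderEmbOfFin_univ]
  rfl

theorem amplAlong_tensorFam (e : Fin r ↪ Fin n) (M : Fin r → Matrix (Fin d) (Fin d) ℂ) :
    amplAlong e (tensorFam M) = tensorFam (Function.extend e M fun _ => 1) := by
  ext x y
  simp only [amplAlong, LinearMap.coe_mk, AddHom.coe_mk, tensorFam_apply, of_apply]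
  rw [← prod_mul_prod_compl (univ.map e), prod_map]
  congr 1
  · exact prod_congr rfl fun i _ => by
      rw [e.injective.extend_apply, Function.comp_apply, Function.comp_apply]
  · refine prod_congr rfl fun j hj => ?_
    rw [Function.extend_apply' _ _ _ (by simpa using hj), Matrix.one_apply]

theorem amplAlong_perm {K : TMat d r}
    (hsym : ∀ (τ : Equiv.Perm (Fin r)) (x y : Fin r → Fin d), K (x ∘ τ) (y ∘ τ) = K x y)
    (τ : Equiv.Perm (Fin r)) (e : Fin r ↪ Fin n) :
    amplAlong (τ.toEmbedding.trans e) K = amplAlong e K := by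
  ext x y
  simp only [amplAlong, LinearMap.coe_mk, AddHom.coe_mk, of_apply]
  rw [← Finset.map_map, Finset.map_univ_equiv]
  exact congrArg (· * _) (hsym τ (x ∘ e) (y ∘ e))

theorem corr_amplAlong {ρ : Matrix (Fin d) (Fin d) ℂ} (hρtr : ρ.trace = 1) (e : Fin r ↪ Fin n)
    (X Y : TMat d r) : corr ρ n (amplAlong e X) (amplAlong e Y) = corr ρ r X Y := by
  suffices h : (corr ρ n).compl₁₂ (amplAlong e) (amplAlong e) = corr ρ r from
    LinearMap.congr_fun (LinearMap.congr_fun h X) Y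
  refine tensor_ext fun M => tensor_ext fun N => ?_
  rw [LinearMap.compl₁₂_apply, amplAlong_tensorFam, amplAlong_tensorFam, corr_tensorFam,
    corr_tensorFam, ← prod_mul_prod_compl (univ.map e), prod_map]
  simp only [e.injective.extend_apply]
  rw [prod_eq_one (s := (univ.map e)ᶜ), mul_one]
  intro j hj
  rw [Function.extend_apply' _ _ _ (by simpa using hj),
    Function.extend_apply' _ _ _ (by simpa using hj)]
  simp [hρtr]

theorem hoefProj_amplAlong_eq_zero {ρ : Matrix (Fin d) (Fin d) ℂ} (hρtr : ρ.trace = 1)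
    (e : Fin r ↪ Fin n) {A : Finset (Fin n)} (hA : ¬A ⊆ univ.map e) (X : TMat d r) :
    hoefProj ρ A (amplAlong e X) = 0 := by
  obtain ⟨j, hjA, hj⟩ := not_subset.1 hA
  refine LinearMap.congr_fun (f := hoefProj ρ A ∘ₗ amplAlong e) (g := 0) (tensor_ext fun M => ?_) X
  ext x y
  rw [LinearMap.comp_apply, amplAlong_tensorFam, hoefProj_tensorFam]
  refine prod_eq_zero (mem_univ j) ?_
  simp only [hjA, if_true]
  rw [Function.extend_apply' _ _ _ (by simpa using hj)]
  simp [hρtr]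

/-! ### Hoeffding components of a kernel -/

variable [NeZero d]

/-- Extension of a multi-index of length `l` to length `r` by zeros. -/
noncomputable def padZero (r : ℕ) (x : Fin l → Fin d) : Fin r → Fin d :=
  fun i => if h : (i : ℕ) < l then x ⟨i, h⟩ else 0

theorem hoefK_eq_submatrix (ρ : Matrix (Fin d) (Fin d) ℂ) (K : TMat d r) (l : ℕ) :
    hoefK ρ K l =
      (hoefProj ρ (univ.filter fun i : Fin r => (i : ℕ) < l) K).submatrix
        (padZero (l := l) r) (padZero r) := by
  ext x y
  simp only [hoefK, hoefProj, of_apply, submatrix_apply, LinearMap.sum_apply, LinearMap.smul_apply]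
  rfl

/-- `hoefK` as a linear map in the kernel. -/
noncomputable def hoefKL (ρ : Matrix (Fin d) (Fin d) ℂ) (l : ℕ) : TMat d r →ₗ[ℂ] TMat d l where
  toFun K := hoefK ρ K l
  map_add' X Y := by
    simp only [hoefK_eq_submatrix, map_add]
    rfl
  map_smul' c X := by
    simp only [hoefK_eq_submatrix, map_smul]
    rfl

theorem hoefK_tensorFam (ρ : Matrix (Fin d) (Fin d) ℂ) (h : l ≤ r)
    (M : Fin r → Matrix (Fin d) (Fin d) ℂ) :
    hoefK ρ (tensorFam M) l =
      (∏ i ∈ (univ.map (Fin.castLEEmb h))ᶜ, (ρ * M i).trace) •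
        tensorFam fun i : Fin l =>
          M (Fin.castLE h i) - (ρ * M (Fin.castLE h i)).trace • 1 := by
  ext x y
  rw [hoefK_eq_submatrix, hoefProj_tensorFam]
  simp only [submatrix_apply, Matrix.smul_apply, tensorFam_apply, smul_eq_mul]
  rw [mul_comm, ← prod_mul_prod_compl (univ.map (Fin.castLEEmb h)), prod_map]
  congr 1
  · exact prod_congr rfl fun i _ => by simp [padZero]
  · refine prod_congr rfl fun i hi => ?_
    have hi' : ¬(i : ℕ) < l := fun hl =>
      mem_compl.1 hi (mem_map.2 ⟨⟨i, hl⟩, mem_univ _, rfl⟩)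
    simp [padZero, hi']

theorem hoefProj_amplAlong {ρ : Matrix (Fin d) (Fin d) ℂ} (hρtr : ρ.trace = 1)
    (h : l ≤ r) (e : Fin r ↪ Fin n) (X : TMat d r) :
    hoefProj ρ (univ.map ((Fin.castLEEmb h).trans e)) (amplAlong e X) =
      amplAlong ((Fin.castLEEmb h).trans e) (hoefK ρ X l) := by
  refine LinearMap.congr_fun (f := hoefProj ρ _ ∘ₗ amplAlong e)
    (g := amplAlong _ ∘ₗ hoefKL ρ l) (tensor_ext fun M => ?_) X
  change hoefProj ρ _ (amplAlong e (tensorFam M)) = amplAlong _ (hoefK ρ (tensorFam M) l)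
  rw [hoefK_tensorFam ρ h, map_smul, amplAlong_tensorFam, amplAlong_tensorFam, hoefProj_tensorFam]
  set f := (Fin.castLEEmb h).trans e with hf
  have hfe (i : Fin l) : f i = e (Fin.castLE h i) := rfl
  ext x y
  simp only [Matrix.smul_apply, tensorFam_apply, smul_eq_mul]
  rw [mul_comm, ← prod_mul_prod_compl (univ.map f), ← prod_mul_prod_compl (univ.map f), mul_assoc]
  congr 1
  · refine prod_congr rfl fun j hj => ?_
    obtain ⟨i, -, rfl⟩ := mem_map.1 hj
    rw [if_pos hj, f.injective.extend_apply, hfe, e.injective.extend_apply]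
  · have hcompl : (univ.map (Fin.castLEEmb h))ᶜ.map e ⊆ (univ.map f)ᶜ := by
      intro j hj
      obtain ⟨i, hi, rfl⟩ := mem_map.1 hj
      simp only [mem_compl, hf, ← Finset.map_map, mem_map'] at hi ⊢
      exact hi
    have htr : ∏ i ∈ (univ.map (Fin.castLEEmb h))ᶜ, (ρ * M i).trace =
        ∏ j ∈ (univ.map f)ᶜ, (ρ * Function.extend e M (fun _ => 1) j).trace := by
      rw [← prod_subset hcompl, prod_map]
      · simp only [e.injective.extend_apply]
      · intro j hj hj'
        rw [Function.extend_apply']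
        · simp [hρtr]
        · rintro ⟨i, rfl⟩
          simp only [mem_compl, hf, ← Finset.map_map, mem_map'] at hj hj'
          exact hj' hj
    rw [htr, ← prod_mul_distrib]
    refine prod_congr rfl fun j hj => ?_
    rw [if_neg (mem_compl.1 hj), Function.extend_apply' (f := f) _ _ _ (by simpa using hj),
      Matrix.smul_apply, smul_eq_mul, mul_comm]
theorem exists_perm_extending {A β : Finset (Fin n)} (hAβ : A ⊆ β) (hA : A.card = l)
    (hβ : β.card = r) (h : l ≤ r) :
    ∃ τ : Equiv.Perm (Fin r),
      (Fin.castLEEmb h).trans (τ.toEmbedding.trans (β.orderEmbOfFin hβ).toEmbedding) =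
        (A.orderEmbOfFin hA).toEmbedding := by
  let g : Fin l ↪ Fin r :=
    ⟨fun i => (β.orderIsoOfFin hβ).symm ⟨A.orderEmbOfFin hA i, hAβ (A.orderEmbOfFin_mem hA i)⟩,
      fun i j hij => by simpa using hij⟩
  obtain ⟨τ, hτ⟩ :=
    (Equiv.Perm.isMultiplyPretransitive (Fin r) l).exists_smul_eq (Fin.castLEEmb h) g
  refine ⟨τ, ?_⟩
  ext i : 1
  have hi : τ (Fin.castLE h i) = g i := DFunLike.congr_fun hτ i
  change β.orderEmbOfFin hβ (τ (Fin.castLE h i)) = A.orderEmbOfFin hA i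
  rw [hi, ← Finset.coe_orderIsoOfFin_apply]
  exact congrArg Subtype.val ((β.orderIsoOfFin hβ).apply_symm_apply _)

/-- The Hoeffding component of a kernel of order `#A`, placed on the slots in `A`. -/
noncomputable def hoefTerm (ρ : Matrix (Fin d) (Fin d) ℂ) (K : TMat d r) (A : Finset (Fin n)) :
    TMat d n :=
  ampl (hoefK ρ K A.card) A rfl

theorem ampl_hoefK (ρ : Matrix (Fin d) (Fin d) ℂ) (K : TMat d r) (A : Finset (Fin n))
    (hA : A.card = l) : ampl (hoefK ρ K l) A hA = hoefTerm ρ K A := by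
  subst hA
  rfl

theorem hoefProj_ampl {ρ : Matrix (Fin d) (Fin d) ℂ} (hρtr : ρ.trace = 1) {K : TMat d r}
    (hsym : ∀ (τ : Equiv.Perm (Fin r)) (x y : Fin r → Fin d), K (x ∘ τ) (y ∘ τ) = K x y)
    {A β : Finset (Fin n)} (hAβ : A ⊆ β) (hβ : β.card = r) :
    hoefProj ρ A (ampl K β hβ) = hoefTerm ρ K A := by
  have h : A.card ≤ r := hβ ▸ card_le_card hAβ
  obtain ⟨τ, hτ⟩ := exists_perm_extending hAβ rfl hβ h
  have key := hoefProj_amplAlong hρtr h (τ.toEmbedding.trans (β.orderEmbOfFin hβ).toEmbedding) K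
  rw [hτ, amplAlong_perm hsym] at key
  rw [ampl_eq_amplAlong, hoefTerm, ampl_eq_amplAlong, ← key, Finset.map_orderEmbOfFin_univ]

theorem ampl_eq_sum_hoefTerm {ρ : Matrix (Fin d) (Fin d) ℂ} (hρtr : ρ.trace = 1) {K : TMat d r}
    (hsym : ∀ (τ : Equiv.Perm (Fin r)) (x y : Fin r → Fin d), K (x ∘ τ) (y ∘ τ) = K x y)
    (β : Finset (Fin n)) (hβ : β.card = r) :
    ampl K β hβ = ∑ A ∈ β.powerset, hoefTerm ρ K A := by
  rw [← sum_hoefProj ρ (ampl K β hβ), ← sum_subset (subset_univ β.powerset)]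
  · exact sum_congr rfl fun A hA => hoefProj_ampl hρtr hsym (mem_powerset.1 hA) hβ
  · intro A _ hA
    rw [ampl_eq_amplAlong]
    refine hoefProj_amplAlong_eq_zero hρtr _ ?_ K
    rwa [Finset.map_orderEmbOfFin_univ, ← mem_powerset]

theorem exists_hoefTerm_eq_hoefProj {ρ : Matrix (Fin d) (Fin d) ℂ} (hρtr : ρ.trace = 1)
    {K : TMat d r}
    (hsym : ∀ (τ : Equiv.Perm (Fin r)) (x y : Fin r → Fin d), K (x ∘ τ) (y ∘ τ) = K x y)
    (hrn : r ≤ n) {A : Finset (Fin n)} (hA : A.card ≤ r) :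
    ∃ X, hoefTerm ρ K A = hoefProj ρ A X := by
  obtain ⟨β, hAβ, hβ⟩ := Finset.exists_superset_card_eq hA (by simpa using hrn)
  exact ⟨_, (hoefProj_ampl hρtr hsym hAβ hβ).symm⟩

theorem corr_hoefTerm_self {ρ : Matrix (Fin d) (Fin d) ℂ} (hρtr : ρ.trace = 1) (K : TMat d r)
    {A : Finset (Fin n)} (hA : A.card = l) :
    corr ρ n (hoefTerm ρ K A) (hoefTerm ρ K A) = corr ρ l (hoefK ρ K l) (hoefK ρ K l) := by
  subst hA
  rw [hoefTerm, ampl_eq_amplAlong, corr_amplAlong hρtr]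

theorem qUstat_hoefK (ρ : Matrix (Fin d) (Fin d) ℂ) (K : TMat d r) (l n : ℕ) :
    qUstat (hoefK ρ K l) n =
      (n.choose l : ℂ)⁻¹ • ∑ A ∈ powersetCard l (univ : Finset (Fin n)), hoefTerm ρ K A := by
  rw [qUstat, ← sum_attach (powersetCard l univ)]
  exact congrArg _ (sum_congr rfl fun A _ => ampl_hoefK ρ K A.1 _)

theorem qUstat_eq_sum {ρ : Matrix (Fin d) (Fin d) ℂ} (hρtr : ρ.trace = 1) {K : TMat d r}
    (hsym : ∀ (τ : Equiv.Perm (Fin r)) (x y : Fin r → Fin d), K (x ∘ τ) (y ∘ τ) = K x y)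
    (hrn : r ≤ n) :
    qUstat K n = ∑ l ∈ range (r + 1), (r.choose l : ℂ) • qUstat (hoefK ρ K l) n := by
  have hswap : ∑ β ∈ powersetCard r (univ : Finset (Fin n)), ∑ A ∈ β.powerset, hoefTerm ρ K A =
      ∑ l ∈ range (r + 1), ((n - l).choose (r - l) : ℂ) •
        ∑ A ∈ powersetCard l (univ : Finset (Fin n)), hoefTerm ρ K A := by
    have h (β : Finset (Fin n)) (hβ : β ∈ powersetCard r univ) :
        ∑ A ∈ β.powerset, hoefTerm ρ K A =
          ∑ l ∈ range (r + 1), ∑ A ∈ powersetCard l univ,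
            if A ⊆ β then hoefTerm ρ K A else 0 := by
      rw [sum_powerset, (mem_powersetCard.1 hβ).2]
      refine sum_congr rfl fun l _ => ?_
      rw [← sum_filter]
      refine sum_congr ?_ fun _ _ => rfl
      ext A
      simp [mem_powersetCard, and_comm]
    rw [sum_congr rfl h, sum_comm]
    refine sum_congr rfl fun l hl => ?_
    rw [sum_comm, smul_sum]
    refine sum_congr rfl fun A hA => ?_
    rw [← sum_filter, sum_const, card_filter_powersetCard_subset _ _ _ (subset_univ A),
      (mem_powersetCard.1 hA).2, card_univ, Fintype.card_fin, Nat.cast_smul_eq_nsmul]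
    exact (mem_powersetCard.1 hA).2.trans_le (Nat.lt_succ_iff.1 (mem_range.1 hl))
  rw [qUstat, sum_congr rfl fun β _ => ampl_eq_sum_hoefTerm hρtr hsym β.1 _,
    sum_attach (powersetCard r (univ : Finset (Fin n)))
      fun β => ∑ A ∈ β.powerset, hoefTerm ρ K A, hswap, smul_sum]
  refine sum_congr rfl fun l hl => ?_
  have hlr : l ≤ r := Nat.lt_succ_iff.1 (mem_range.1 hl)
  rw [qUstat_hoefK, smul_smul, smul_smul]
  congr 1
  have h1 : (n.choose r : ℂ) ≠ 0 := Nat.cast_ne_zero.2 (Nat.choose_pos hrn).ne'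
  have h2 : (n.choose l : ℂ) ≠ 0 := Nat.cast_ne_zero.2 (Nat.choose_pos (hlr.trans hrn)).ne'
  have h3 : (n.choose r : ℂ) * r.choose l = n.choose l * (n - l).choose (r - l) :=
    mod_cast Nat.choose_mul hlr
  field_simp
  linear_combination -h3

theorem corr_hoefTerm_of_ne {ρ : Matrix (Fin d) (Fin d) ℂ} (hρtr : ρ.trace = 1)
    {K : TMat d r}
    (hsym : ∀ (τ : Equiv.Perm (Fin r)) (x y : Fin r → Fin d), K (x ∘ τ) (y ∘ τ) = K x y)
    (hrn : r ≤ n) {A B : Finset (Fin n)} (hA : A.card ≤ r) (hB : B.card ≤ r) (hAB : A ≠ B) :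
    corr ρ n (hoefTerm ρ K A) (hoefTerm ρ K B) = 0 := by
  obtain ⟨X, hX⟩ := exists_hoefTerm_eq_hoefProj hρtr hsym hrn hA
  obtain ⟨Y, hY⟩ := exists_hoefTerm_eq_hoefProj hρtr hsym hrn hB
  rw [hX, hY, corr_hoefProj_of_ne hρtr hAB]

theorem corr_conjTranspose_hoefTerm_of_ne {ρ : Matrix (Fin d) (Fin d) ℂ} (hρ : ρ.IsHermitian)
    (hρtr : ρ.trace = 1) {K : TMat d r}
    (hsym : ∀ (τ : Equiv.Perm (Fin r)) (x y : Fin r → Fin d), K (x ∘ τ) (y ∘ τ) = K x y)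
    (hrn : r ≤ n) {A B : Finset (Fin n)} (hA : A.card ≤ r) (hB : B.card ≤ r) (hAB : A ≠ B) :
    corr ρ n (hoefTerm ρ K A)ᴴ (hoefTerm ρ K B) = 0 := by
  obtain ⟨X, hX⟩ := exists_hoefTerm_eq_hoefProj hρtr hsym hrn hA
  obtain ⟨Y, hY⟩ := exists_hoefTerm_eq_hoefProj hρtr hsym hrn hB
  rw [hX, hY, ← hoefProj_conjTranspose hρ, corr_hoefProj_of_ne hρtr hAB]

theorem corr_conjTranspose_qUstat_hoefK_of_ne {ρ : Matrix (Fin d) (Fin d) ℂ}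
    (hρ : ρ.IsHermitian) (hρtr : ρ.trace = 1) {K : TMat d r}
    (hsym : ∀ (τ : Equiv.Perm (Fin r)) (x y : Fin r → Fin d), K (x ∘ τ) (y ∘ τ) = K x y)
    (hrn : r ≤ n) {l l' : ℕ} (hl : l ≤ r) (hl' : l' ≤ r) (hne : l ≠ l') :
    corr ρ n (qUstat (hoefK ρ K l) n)ᴴ (qUstat (hoefK ρ K l') n) = 0 := by
  simp only [qUstat_hoefK, Matrix.conjTranspose_smul, Matrix.conjTranspose_sum, map_smul, map_sum,
    LinearMap.smul_apply, LinearMap.sum_apply]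
  refine smul_eq_zero_of_right _ (sum_eq_zero fun B hB => smul_eq_zero_of_right _ ?_)
  refine sum_eq_zero fun A hA => ?_
  have hA' := (mem_powersetCard.1 hA).2
  have hB' := (mem_powersetCard.1 hB).2
  exact corr_conjTranspose_hoefTerm_of_ne hρ hρtr hsym hrn (by lia) (by lia) (by grind)

theorem corr_qUstat_hoefK {ρ : Matrix (Fin d) (Fin d) ℂ} (hρtr : ρ.trace = 1) {K : TMat d r}
    (hsym : ∀ (τ : Equiv.Perm (Fin r)) (x y : Fin r → Fin d), K (x ∘ τ) (y ∘ τ) = K x y)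
    (hrn : r ≤ n) {l l' : ℕ} (hl : l ≤ r) (hl' : l' ≤ r) :
    corr ρ n (qUstat (hoefK ρ K l) n) (qUstat (hoefK ρ K l') n) =
      if l = l' then (n.choose l : ℂ)⁻¹ * corr ρ l (hoefK ρ K l) (hoefK ρ K l) else 0 := by
  simp only [qUstat_hoefK, map_smul, map_sum, LinearMap.smul_apply, LinearMap.sum_apply,
    ← smul_sum]
  split_ifs with h
  · subst h
    have hdiag (B : Finset (Fin n)) (hB : B ∈ powersetCard l univ) :
        ∑ A ∈ powersetCard l univ, corr ρ n (hoefTerm ρ K A) (hoefTerm ρ K B) =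
          corr ρ l (hoefK ρ K l) (hoefK ρ K l) := by
      rw [sum_eq_single_of_mem B hB, corr_hoefTerm_self hρtr K (mem_powersetCard.1 hB).2]
      intro A hA hAB
      exact corr_hoefTerm_of_ne hρtr hsym hrn ((mem_powersetCard.1 hA).2.trans_le hl)
        ((mem_powersetCard.1 hB).2.trans_le hl) hAB
    have hne : (n.choose l : ℂ) ≠ 0 := Nat.cast_ne_zero.2 (Nat.choose_pos (hl.trans hrn)).ne'
    rw [sum_congr rfl hdiag, sum_const, card_powersetCard, card_univ, Fintype.card_fin,
      ← Nat.cast_smul_eq_nsmul ℂ]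
    simp only [smul_eq_mul]
    rw [inv_mul_cancel_left₀ hne]
  · refine smul_eq_zero_of_right _ (smul_eq_zero_of_right _ (sum_eq_zero fun B hB => ?_))
    refine sum_eq_zero fun A hA => ?_
    have hA' := (mem_powersetCard.1 hA).2
    have hB' := (mem_powersetCard.1 hB).2
    exact corr_hoefTerm_of_ne hρtr hsym hrn (by lia) (by lia) (by grind)

theorem corr_hoefK_zero {ρ : Matrix (Fin d) (Fin d) ℂ} (K : TMat d r) :
    corr ρ 0 (hoefK ρ K 0) (hoefK ρ K 0) = ((tensorFam fun _ : Fin r => ρ) * K).trace ^ 2 := by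
  have h (x y : Fin 0 → Fin d) :
      hoefK ρ K 0 x y = ((tensorFam fun _ : Fin r => ρ) * K).trace := by
    rw [Matrix.trace, sum_congr rfl fun t _ => by rw [diag_apply, Matrix.mul_apply],
      Finset.sum_comm]
    simp [hoefK, qCondExp, tensorFam_apply]
  simp [corr_apply, Matrix.trace, Matrix.mul_apply, h, tensorFam_apply, sq]

theorem corr_qUstat_self {ρ : Matrix (Fin d) (Fin d) ℂ} (hρtr : ρ.trace = 1) {K : TMat d r}
    (hsym : ∀ (τ : Equiv.Perm (Fin r)) (x y : Fin r → Fin d), K (x ∘ τ) (y ∘ τ) = K x y)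
    (hrn : r ≤ n) :
    corr ρ n (qUstat K n) (qUstat K n) - ((tensorFam fun _ : Fin r => ρ) * K).trace ^ 2 =
      ∑ l ∈ Icc 1 r, (r.choose l : ℂ) ^ 2 * (n.choose l : ℂ)⁻¹ *
        corr ρ l (hoefK ρ K l) (hoefK ρ K l) := by
  have h : corr ρ n (qUstat K n) (qUstat K n) =
      ∑ l ∈ range (r + 1), (r.choose l : ℂ) ^ 2 * (n.choose l : ℂ)⁻¹ *
        corr ρ l (hoefK ρ K l) (hoefK ρ K l) := by
    rw [qUstat_eq_sum hρtr hsym hrn]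
    simp only [map_smul, map_sum, LinearMap.smul_apply, LinearMap.sum_apply]
    refine sum_congr rfl fun l hl => ?_
    have hlr : l ≤ r := Nat.lt_succ_iff.1 (mem_range.1 hl)
    rw [sum_eq_single_of_mem l hl]
    · rw [corr_qUstat_hoefK hρtr hsym hrn hlr hlr, if_pos rfl, smul_eq_mul, smul_eq_mul]
      ring
    · intro l' hl' hne
      rw [corr_qUstat_hoefK hρtr hsym hrn (Nat.lt_succ_iff.1 (mem_range.1 hl')) hlr, if_neg hne,
        smul_zero]
  rw [h, range_eq_Ico, sum_eq_sum_Ico_succ_bot (Nat.succ_pos r), corr_hoefK_zero]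
  simp only [Nat.choose_zero_right, Nat.cast_one, one_pow, inv_one, one_mul, zero_add,
    add_sub_cancel_left]
  rfl

theorem pow_le_mul_choose {c l r n : ℕ} (hc : c ≤ l) (hl : 1 ≤ l) (hlr : l ≤ r) (hrn : r ≤ n) :
    n ^ c ≤ r ^ l * l.factorial * n.choose l := by
  have hn : n ≤ r * (n + 1 - l) := by
    obtain ⟨k, rfl⟩ := Nat.exists_eq_add_of_le hrn
    obtain ⟨m, rfl⟩ := Nat.exists_eq_add_of_le hlr
    rw [show l + m + k + 1 - l = m + k + 1 by lia]
    nlinarith [Nat.zero_le (m * k), Nat.zero_le (m * m)]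
  calc n ^ c ≤ n ^ l := Nat.pow_le_pow_right (by lia) hc
    _ ≤ (r * (n + 1 - l)) ^ l := Nat.pow_le_pow_left hn l
    _ = r ^ l * (n + 1 - l) ^ l := mul_pow _ _ _
    _ ≤ r ^ l * (l.factorial * n.choose l) := by
      rw [← Nat.descFactorial_eq_factorial_mul_choose]
      exact Nat.mul_le_mul_left _ (n.pow_sub_le_descFactorial l)
    _ = _ := (mul_assoc _ _ _).symm

end QuantumUstat

/-- **Hoeffding decomposition and variance of quantum U-statistics.** -/
theorem stmt9 {d r : ℕ} [NeZero d] (ρ : Matrix (Fin d) (Fin d) ℂ)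
    (hρ : ρ.PosDef) (hρtr : ρ.trace = 1)
    (K : Matrix (Fin r → Fin d) (Fin r → Fin d) ℂ)
    (hherm : K.IsHermitian)
    (hsym : ∀ (τ : Equiv.Perm (Fin r)) (x y : Fin r → Fin d), K (x ∘ τ) (y ∘ τ) = K x y)
    (θ : ℂ) (hθ : θ = ((tensorFam fun _ : Fin r => ρ) * K).trace) :
    (∀ n : ℕ, r ≤ n →
      -- (i) decomposition into mutually orthogonal U-statistics
      (qUstat K n = ∑ l ∈ Finset.range (r + 1), (r.choose l : ℂ) • qUstat (hoefK ρ K l) n) ∧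
      -- (ii) orthogonality in L²(ρ^{⊗n})
      (∀ l l' : ℕ, l ∈ Finset.Icc 1 r → l' ∈ Finset.Icc 1 r → l ≠ l' →
        ((tensorFam fun _ : Fin n => ρ) *
          (qUstat (hoefK ρ K l) n)ᴴ * qUstat (hoefK ρ K l') n).trace = 0) ∧
      -- (iii) the variance formula
      ((tensorFam fun _ : Fin n => ρ) * (qUstat K n * qUstat K n)).trace - θ ^ 2 =
        ∑ l ∈ Finset.Icc 1 r,
          (r.choose l : ℂ) ^ 2 * (n.choose l : ℂ)⁻¹ *
            ((tensorFam fun _ : Fin l => ρ) * (hoefK ρ K l * hoefK ρ K l)).trace) ∧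
    -- consequence: degenerate kernels have variance O(n^{-c})
    (∀ c : ℕ, 1 ≤ c → c ≤ r →
      (∀ l : ℕ, 1 ≤ l → l < c → hoefK ρ K l = 0) →
      ∃ C : ℝ, ∀ n : ℕ, r ≤ n →
        ‖((tensorFam fun _ : Fin n => ρ) * (qUstat K n * qUstat K n)).trace - θ ^ 2‖ ≤
          C / (n : ℝ) ^ c) := by
  have hvar : ∀ n : ℕ, r ≤ n → _ := fun n hrn =>
    QuantumUstat.corr_qUstat_self (n := n) hρtr hsym hrn
  simp only [QuantumUstat.corr_apply, ← hθ] at hvar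
  refine ⟨fun n hrn => ⟨QuantumUstat.qUstat_eq_sum hρtr hsym hrn, fun l l' hl hl' hne => ?_,
    hvar n hrn⟩, fun c hc hcr hK => ?_⟩
  · rw [mul_assoc, ← QuantumUstat.corr_apply]
    exact QuantumUstat.corr_conjTranspose_qUstat_hoefK_of_ne hρ.isHermitian hρtr hsym hrn
      (Finset.mem_Icc.1 hl).2 (Finset.mem_Icc.1 hl').2 hne
  · refine ⟨∑ l ∈ Finset.Icc 1 r, (r.choose l : ℝ) ^ 2 * (r ^ l * l.factorial) *
      ‖((tensorFam fun _ : Fin l => ρ) * (hoefK ρ K l * hoefK ρ K l)).trace‖, fun n hrn => ?_⟩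
    rw [hvar n hrn, Finset.sum_div]
    refine (norm_sum_le _ _).trans (Finset.sum_le_sum fun l hl => ?_)
    obtain ⟨hl1, hlr⟩ := Finset.mem_Icc.1 hl
    rcases lt_or_ge l c with hlc | hcl
    · simp [hK l hl1 hlc]
    have hn : (0 : ℝ) < n := Nat.cast_pos.2 (by lia)
    have hch : (0 : ℝ) < n.choose l := Nat.cast_pos.2 (Nat.choose_pos (hlr.trans hrn))
    have hbound : ((n.choose l : ℝ))⁻¹ ≤ (r ^ l * l.factorial) / (n : ℝ) ^ c := by
      rw [inv_le_iff_one_le_mul₀ hch, div_mul_eq_mul_div, one_le_div (by positivity)]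
      exact_mod_cast QuantumUstat.pow_le_mul_choose hcl hl1 hlr hrn
    rw [norm_mul, norm_mul, norm_pow, norm_inv, Complex.norm_natCast, Complex.norm_natCast,
      mul_div_right_comm, mul_div_assoc]
    gcongr
end

section
/- Let K be a quantum symmetric kernel of order r with θ := Tr(ρ^{⊗r} K). Let K_1 ∈ M(ℂ^d) be its first Hoeffding projection, K_1 := Tr_{2,...,r}[ (1 ⊗ ρ^{⊗(r−1)}) K ] − θ·1 (the partial trace of (1⊗ρ^{⊗(r−1)})K over tensor slots 2,...,r), and set ξ_1 := Tr(ρ K_1²). Assume K_1 ≠ 0 (non-degenerate kernel). Then the measurement distribution of √n (U_n − θ·1) in the state ρ^{⊗n} converges weakly to the Gaussian law N(0, r² ξ_1): for every bounded continuous function f : ℝ → ℝ, lim_{n→∞} Tr( ρ^{⊗n} · f(√n (U_n − θ·1)) ) = ∫ f dN(0, r² ξ_1), where f is applied to the selfadjoint matrix √n(U_n − θ·1) via the continuous functional calculus. -/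
open scoped BigOperators
open Matrix Filter Topology MeasureTheory ProbabilityTheory
open scoped ComplexOrder

/-- The partial trace over the tensor slots `2, ..., r` of an operator on `(ℂ^d)^{⊗r}`
(keeping the first slot). -/
noncomputable def ptrRest {d r : ℕ} (hr : 0 < r)
    (N : Matrix (Fin r → Fin d) (Fin r → Fin d) ℂ) : Matrix (Fin d) (Fin d) ℂ :=
  Matrix.of fun a b =>
    ∑ g : Fin r → Fin d,
      if g ⟨0, hr⟩ = a then N g (Function.update g ⟨0, hr⟩ b) else 0

/-- The first Hoeffding projection
`K₁ := Tr_{2,...,r}[(1 ⊗ ρ^{⊗(r−1)}) K] − θ·1` of a kernel of order `r`. -/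
noncomputable def firstHoef {d r : ℕ} (hr : 0 < r) (ρ : Matrix (Fin d) (Fin d) ℂ)
    (K : Matrix (Fin r → Fin d) (Fin r → Fin d) ℂ) : Matrix (Fin d) (Fin d) ℂ :=
  ptrRest hr ((tensorFam fun j : Fin r => if j = ⟨0, hr⟩ then 1 else ρ) * K) -
    ((tensorFam fun _ : Fin r => ρ) * K).trace • (1 : Matrix (Fin d) (Fin d) ℂ)

/-! ### Calculus of elementary tensors -/

lemma tensorFam_mul {d n : ℕ} (M N : Fin n → Matrix (Fin d) (Fin d) ℂ) :
    tensorFam M * tensorFam N = tensorFam fun i => M i * N i := by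
  ext x y
  simp only [tensorFam, Matrix.mul_apply, Matrix.of_apply, Finset.prod_univ_sum,
    Fintype.piFinset_univ, Finset.prod_mul_distrib]

lemma tensorFam_trace {d n : ℕ} (M : Fin n → Matrix (Fin d) (Fin d) ℂ) :
    (tensorFam M).trace = ∏ i, (M i).trace := by
  simp only [tensorFam, Matrix.trace, Matrix.diag_apply, Matrix.of_apply, Finset.prod_univ_sum,
    Fintype.piFinset_univ]

lemma tensorFam_one {d n : ℕ} :
    tensorFam (fun _ : Fin n => (1 : Matrix (Fin d) (Fin d) ℂ)) = 1 := by
  ext x y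
  simp only [tensorFam, Matrix.of_apply, Matrix.one_apply]
  by_cases h : x = y
  · simp [h]
  · rw [if_neg h]
    obtain ⟨i, hi⟩ := Function.ne_iff.mp h
    exact Finset.prod_eq_zero (Finset.mem_univ i) (by simp [hi])

lemma tensorFam_conjTranspose {d n : ℕ} (M : Fin n → Matrix (Fin d) (Fin d) ℂ) :
    (tensorFam M)ᴴ = tensorFam fun i => (M i)ᴴ := by
  ext x y
  simp [tensorFam, Matrix.conjTranspose_apply]

open scoped MatrixOrder in
lemma Matrix.PosSemidef.exists_eq_conjTranspose_mul_self {ι : Type*} [Fintype ι] [DecidableEq ι]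
    {A : Matrix ι ι ℂ} (hA : A.PosSemidef) : ∃ B : Matrix ι ι ℂ, A = Bᴴ * B :=
  CStarAlgebra.nonneg_iff_eq_star_mul_self.mp hA.nonneg

lemma tensorFam_posSemidef {d n : ℕ} {σ : Matrix (Fin d) (Fin d) ℂ} (hσ : σ.PosSemidef) :
    (tensorFam fun _ : Fin n => σ).PosSemidef := by
  obtain ⟨B, rfl⟩ := hσ.exists_eq_conjTranspose_mul_self
  rw [← tensorFam_mul, ← tensorFam_conjTranspose]
  exact Matrix.posSemidef_conjTranspose_mul_self _

/-- Elementary tensors span the operators on `(ℂ^d)^{⊗n}`. -/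
lemma tensor_induction {d n : ℕ}
    {p : Matrix (Fin n → Fin d) (Fin n → Fin d) ℂ → Prop}
    (add : ∀ A B, p A → p B → p (A + B)) (smul : ∀ (c : ℂ) A, p A → p (c • A))
    (tensor : ∀ M, p (tensorFam M)) (A : Matrix (Fin n → Fin d) (Fin n → Fin d) ℂ) : p A := by
  have hz : p 0 := by simpa using smul 0 _ (tensor fun _ => 0)
  have hs : ∀ (x y : Fin n → Fin d) (c : ℂ), Matrix.single x y c =
      c • tensorFam fun i => Matrix.single (x i) (y i) (1 : ℂ) := by
    intro x y c
    ext u v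
    simp only [tensorFam, Matrix.smul_apply, Matrix.of_apply, Matrix.single_apply, smul_eq_mul,
      Finset.prod_ite_zero, Finset.prod_const_one, Finset.mem_univ, true_imp_iff, forall_and,
      mul_ite, mul_one, mul_zero, funext_iff]
  induction A using Matrix.induction_on' with
  | h_zero => exact hz
  | h_add A B hA hB => exact add A B hA hB
  | h_std_basis x y c => rw [hs]; exact smul _ _ (tensor _)

/-- The operator acting as `a` on the slot `i` and as the identity elsewhere. -/
noncomputable def siteOp {d n : ℕ} (i : Fin n) (a : Matrix (Fin d) (Fin d) ℂ) :
    Matrix (Fin n → Fin d) (Fin n → Fin d) ℂ :=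
  tensorFam (Function.update (fun _ => 1) i a)

/-- The ampliation of a kernel along a map of slots `e`. -/
noncomputable def ampAlong {d r n : ℕ} (e : Fin r → Fin n)
    (K : Matrix (Fin r → Fin d) (Fin r → Fin d) ℂ) :
    Matrix (Fin n → Fin d) (Fin n → Fin d) ℂ :=
  Matrix.of fun x y => K (x ∘ e) (y ∘ e) *
    ∏ j ∈ (Finset.univ.image e)ᶜ, if x j = y j then (1 : ℂ) else 0

section Amp

variable {d r n : ℕ}

lemma ampAlong_add (e : Fin r → Fin n) (A B : Matrix (Fin r → Fin d) (Fin r → Fin d) ℂ) :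
    ampAlong e (A + B) = ampAlong e A + ampAlong e B := by
  ext x y; simp [ampAlong, add_mul]

lemma ampAlong_smul (e : Fin r → Fin n) (c : ℂ) (A : Matrix (Fin r → Fin d) (Fin r → Fin d) ℂ) :
    ampAlong e (c • A) = c • ampAlong e A := by
  ext x y; simp [ampAlong, mul_assoc]

/-- `ampAlong e` as a linear map. -/
noncomputable def ampLin (e : Fin r → Fin n) :
    Matrix (Fin r → Fin d) (Fin r → Fin d) ℂ →ₗ[ℂ] Matrix (Fin n → Fin d) (Fin n → Fin d) ℂ where
  toFun := ampAlong e
  map_add' := ampAlong_add e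
  map_smul' := ampAlong_smul e

lemma ampLin_apply (e : Fin r → Fin n) (A : Matrix (Fin r → Fin d) (Fin r → Fin d) ℂ) :
    ampLin e A = ampAlong e A := rfl

lemma prod_image_compl_extend {M : Type*} [CommMonoid M] {e : Fin r → Fin n}
    (he : Function.Injective e) (f : Fin n → M) :
    ∏ j, f j = (∏ i, f (e i)) * ∏ j ∈ (Finset.univ.image e)ᶜ, f j := by
  rw [← Finset.prod_mul_prod_compl (Finset.univ.image e), Finset.prod_image (fun _ _ _ _ h => he h)]

lemma ampAlong_tensorFam {e : Fin r → Fin n} (he : Function.Injective e)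
    (M : Fin r → Matrix (Fin d) (Fin d) ℂ) :
    ampAlong e (tensorFam M) = tensorFam (Function.extend e M fun _ => 1) := by
  ext x y
  simp only [ampAlong, tensorFam, Matrix.of_apply, Function.comp]
  rw [prod_image_compl_extend he]
  congr 1
  · exact Finset.prod_congr rfl fun i _ => by rw [he.extend_apply]
  · refine Finset.prod_congr rfl fun j hj => ?_
    rw [Function.extend_apply' _ _ _ (by simpa using hj), Matrix.one_apply]

lemma ampAlong_one {e : Fin r → Fin n} (he : Function.Injective e) :
    ampAlong e (1 : Matrix (Fin r → Fin d) (Fin r → Fin d) ℂ) = 1 := by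
  rw [← tensorFam_one, ampAlong_tensorFam he, ← tensorFam_one]
  congr 1
  ext1 j
  by_cases h : ∃ i, e i = j
  · obtain ⟨i, rfl⟩ := h
    rw [he.extend_apply]
  · rw [Function.extend_apply' _ _ _ h]

lemma ampAlong_siteOp {e : Fin r → Fin n} (he : Function.Injective e) (i : Fin r)
    (a : Matrix (Fin d) (Fin d) ℂ) :
    ampAlong e (siteOp i a) = siteOp (e i) a := by
  rw [siteOp, ampAlong_tensorFam he, siteOp]
  congr 1
  ext1 j
  by_cases h : ∃ i, e i = j
  · obtain ⟨k, rfl⟩ := h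
    rw [he.extend_apply]
    simp [Function.update_apply, he.eq_iff]
  · rw [Function.extend_apply' _ _ _ h, Function.update_of_ne]
    rintro rfl
    exact h ⟨i, rfl⟩

lemma ampAlong_mul {e : Fin r → Fin n} (he : Function.Injective e)
    (A B : Matrix (Fin r → Fin d) (Fin r → Fin d) ℂ) :
    ampAlong e A * ampAlong e B = ampAlong e (A * B) := by
  induction A using tensor_induction with
  | add A A' hA hA' => rw [ampAlong_add, add_mul, add_mul, ampAlong_add, hA, hA']
  | smul c A hA => rw [ampAlong_smul, smul_mul_assoc, smul_mul_assoc, ampAlong_smul, hA]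
  | tensor M =>
    induction B using tensor_induction with
    | add A A' hA hA' => rw [ampAlong_add, mul_add, mul_add, ampAlong_add, hA, hA']
    | smul c A hA => rw [ampAlong_smul, mul_smul_comm, mul_smul_comm, ampAlong_smul, hA]
    | tensor N =>
      rw [tensorFam_mul]
      simp only [ampAlong_tensorFam he]
      rw [tensorFam_mul]
      congr 1
      ext1 j
      by_cases h : ∃ i, e i = j
      · obtain ⟨k, rfl⟩ := h
        simp only [he.extend_apply]
      · simp only [Function.extend_apply' _ _ _ h, mul_one]

lemma ampAlong_conjTranspose (e : Fin r → Fin n)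
    (A : Matrix (Fin r → Fin d) (Fin r → Fin d) ℂ) :
    (ampAlong e A)ᴴ = ampAlong e Aᴴ := by
  ext x y
  simp [ampAlong, Matrix.conjTranspose_apply, apply_ite, eq_comm]

lemma trace_tensorFam_mul_ampAlong {e : Fin r → Fin n} (he : Function.Injective e)
    {σ : Matrix (Fin d) (Fin d) ℂ} (hσ : σ.trace = 1)
    (A : Matrix (Fin r → Fin d) (Fin r → Fin d) ℂ) :
    ((tensorFam fun _ : Fin n => σ) * ampAlong e A).trace =
      ((tensorFam fun _ : Fin r => σ) * A).trace := by
  induction A using tensor_induction with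
  | add A A' hA hA' => simp only [ampAlong_add, mul_add, Matrix.trace_add, hA, hA']
  | smul c A hA => simp only [ampAlong_smul, mul_smul_comm, Matrix.trace_smul, hA]
  | tensor M =>
    rw [ampAlong_tensorFam he, tensorFam_mul, tensorFam_mul, tensorFam_trace, tensorFam_trace]
    refine (Fintype.prod_of_injective e he _ _ (fun j hj => ?_) fun i => ?_).symm
    · rw [Function.extend_apply' _ _ _ hj, mul_one, hσ]
    · rw [he.extend_apply]

/-- Kernels on disjoint sets of slots are uncorrelated in a product state. -/
lemma trace_tensorFam_mul_ampAlong_mul_of_disjoint {e e' : Fin r → Fin n}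
    (he : Function.Injective e) (he' : Function.Injective e')
    (hee : Disjoint (Set.range e) (Set.range e'))
    {σ : Matrix (Fin d) (Fin d) ℂ} (hσ : σ.trace = 1)
    (A B : Matrix (Fin r → Fin d) (Fin r → Fin d) ℂ) :
    ((tensorFam fun _ : Fin n => σ) * (ampAlong e A * ampAlong e' B)).trace =
      ((tensorFam fun _ : Fin r => σ) * A).trace * ((tensorFam fun _ : Fin r => σ) * B).trace := by
  induction A using tensor_induction with
  | add A A' hA hA' =>
    simp only [ampAlong_add, mul_add, add_mul, Matrix.trace_add, hA, hA']
  | smul c A hA =>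
    simp only [ampAlong_smul, mul_smul_comm, smul_mul_assoc, Matrix.trace_smul, hA]
  | tensor M =>
    induction B using tensor_induction with
    | add A A' hA hA' => simp only [ampAlong_add, mul_add, Matrix.trace_add, hA, hA']
    | smul c A hA => simp only [ampAlong_smul, mul_smul_comm, Matrix.trace_smul, hA]
    | tensor N =>
      rw [← trace_tensorFam_mul_ampAlong he hσ, ← trace_tensorFam_mul_ampAlong he' hσ]
      simp only [ampAlong_tensorFam he, ampAlong_tensorFam he', tensorFam_mul, tensorFam_trace]
      rw [← Finset.prod_mul_distrib]
      refine Finset.prod_congr rfl fun j _ => ?_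
      by_cases h : ∃ i, e i = j
      · have h' : ¬ ∃ i, e' i = j := fun h' => Set.disjoint_left.mp hee h h'
        rw [Function.extend_apply' _ _ _ h', mul_one, mul_one, hσ, mul_one]
      · rw [Function.extend_apply' _ _ _ h, one_mul, mul_one, hσ, one_mul]

end Amp

/-! ### Partial traces -/

/-- The conditional expectation `Tr_{2,...,r}[(1 ⊗ σ^{⊗(r−1)}) A]`. -/
noncomputable def condFirst {d r : ℕ} (hr : 0 < r) (σ : Matrix (Fin d) (Fin d) ℂ)
    (A : Matrix (Fin r → Fin d) (Fin r → Fin d) ℂ) : Matrix (Fin d) (Fin d) ℂ :=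
  ptrRest hr ((tensorFam fun j : Fin r => if j = ⟨0, hr⟩ then 1 else σ) * A)

section Cond

variable {d r n : ℕ} (hr : 0 < r)

lemma trace_mul_ptrRest (a : Matrix (Fin d) (Fin d) ℂ)
    (N : Matrix (Fin r → Fin d) (Fin r → Fin d) ℂ) :
    (a * ptrRest hr N).trace = (siteOp ⟨0, hr⟩ a * N).trace := by
  rw [Matrix.trace_mul_comm, Matrix.trace_mul_comm (siteOp _ _)]
  simp only [Matrix.trace, Matrix.diag_apply, Matrix.mul_apply, ptrRest, Matrix.of_apply]
  have h1 : ∀ x y : Fin d, (∑ g : Fin r → Fin d,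
      if g ⟨0, hr⟩ = x then N g (Function.update g ⟨0, hr⟩ y) else 0) * a y x =
      ∑ g : Fin r → Fin d, if g ⟨0, hr⟩ = x then
        N g (Function.update g ⟨0, hr⟩ y) * a y (g ⟨0, hr⟩) else 0 := by
    intro x y
    rw [Finset.sum_mul]
    refine Finset.sum_congr rfl fun g _ => ?_
    split_ifs with h
    · rw [h]
    · simp
  simp_rw [h1]
  rw [Finset.sum_comm]
  refine (Finset.sum_congr rfl fun y _ => Finset.sum_comm).trans ?_
  have h2 : ∀ (g : Fin r → Fin d) (y : Fin d), siteOp ⟨0, hr⟩ a (Function.update g ⟨0, hr⟩ y) g =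
      a y (g ⟨0, hr⟩) := by
    intro g y
    simp only [siteOp, tensorFam, Matrix.of_apply]
    rw [Finset.prod_eq_single ⟨0, hr⟩]
    · simp
    · intro j _ hj
      simp [Function.update_of_ne hj]
    · simp
  have h3 : ∀ (g h : Fin r → Fin d), (∀ y, Function.update g ⟨0, hr⟩ y ≠ h) →
      siteOp ⟨0, hr⟩ a h g = 0 := by
    intro g h hgh
    have := hgh (h ⟨0, hr⟩)
    obtain ⟨j, hj⟩ := Function.ne_iff.mp this
    have hj0 : j ≠ ⟨0, hr⟩ := by
      rintro rfl
      simp at hj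
    rw [Function.update_of_ne hj0] at hj
    simp only [siteOp, tensorFam, Matrix.of_apply]
    refine Finset.prod_eq_zero (Finset.mem_univ j) ?_
    rw [Function.update_of_ne hj0, Matrix.one_apply_ne hj.symm]
  rw [Finset.sum_comm]
  refine Finset.sum_congr rfl fun g _ => ?_
  simp only [Finset.sum_ite_eq, Finset.mem_univ, if_true]
  refine Fintype.sum_of_injective (fun y => Function.update g ⟨0, hr⟩ y)
    (Function.update_injective g _) _ _ (fun h hh => ?_) fun y => ?_
  · rw [h3 g h (fun y hy => hh ⟨y, hy⟩), mul_zero]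
  · rw [h2]

lemma trace_mul_condFirst (σ a : Matrix (Fin d) (Fin d) ℂ)
    (A : Matrix (Fin r → Fin d) (Fin r → Fin d) ℂ) :
    (a * condFirst hr σ A).trace =
      (tensorFam (Function.update (fun _ : Fin r => σ) ⟨0, hr⟩ a) * A).trace := by
  rw [condFirst, trace_mul_ptrRest, ← mul_assoc, siteOp, tensorFam_mul]
  congr 3
  ext1 j
  by_cases h : j = ⟨0, hr⟩
  · subst h; simp
  · simp [h]

lemma condFirst_apply (σ : Matrix (Fin d) (Fin d) ℂ)
    (A : Matrix (Fin r → Fin d) (Fin r → Fin d) ℂ) (x y : Fin d) :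
    condFirst hr σ A x y = (tensorFam (Function.update (fun _ : Fin r => σ) ⟨0, hr⟩
      (Matrix.single y x 1)) * A).trace := by
  rw [← trace_mul_condFirst, Matrix.trace_single_mul, one_smul]

lemma condFirst_add (σ : Matrix (Fin d) (Fin d) ℂ)
    (A B : Matrix (Fin r → Fin d) (Fin r → Fin d) ℂ) :
    condFirst hr σ (A + B) = condFirst hr σ A + condFirst hr σ B := by
  ext x y
  simp only [Matrix.add_apply, condFirst_apply, mul_add, Matrix.trace_add]

lemma condFirst_smul (σ : Matrix (Fin d) (Fin d) ℂ) (c : ℂ)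
    (A : Matrix (Fin r → Fin d) (Fin r → Fin d) ℂ) :
    condFirst hr σ (c • A) = c • condFirst hr σ A := by
  ext x y
  simp only [Matrix.smul_apply, condFirst_apply, mul_smul_comm, Matrix.trace_smul]

lemma condFirst_tensorFam (σ : Matrix (Fin d) (Fin d) ℂ) (hσ : σ.trace = 1)
    (M : Fin r → Matrix (Fin d) (Fin d) ℂ) :
    condFirst hr σ (tensorFam M) =
      (∏ i, (σ * Function.update M ⟨0, hr⟩ 1 i).trace) • M ⟨0, hr⟩ := by
  rw [Matrix.ext_iff_trace_mul_left]
  intro a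
  rw [trace_mul_condFirst, tensorFam_mul, tensorFam_trace, mul_smul_comm, Matrix.trace_smul,
    smul_eq_mul, ← Finset.mul_prod_erase _ _ (Finset.mem_univ (⟨0, hr⟩ : Fin r)),
    ← Finset.mul_prod_erase _ _ (Finset.mem_univ (⟨0, hr⟩ : Fin r)), mul_comm]
  simp only [Function.update_self, mul_one, hσ, one_mul]
  congr 1
  refine Finset.prod_congr rfl fun j hj => ?_
  rw [Function.update_of_ne (Finset.ne_of_mem_erase hj),
    Function.update_of_ne (Finset.ne_of_mem_erase hj)]

/-- Kernels sharing exactly one slot: their correlation is that of the conditional expectations. -/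
lemma trace_tensorFam_mul_ampAlong_mul_of_inter {e e' : Fin r → Fin n}
    (he : Function.Injective e) (he' : Function.Injective e')
    (h0 : e ⟨0, hr⟩ = e' ⟨0, hr⟩) (hee : ∀ i i', e i = e' i' → i = ⟨0, hr⟩)
    {σ : Matrix (Fin d) (Fin d) ℂ} (hσ : σ.trace = 1)
    (A B : Matrix (Fin r → Fin d) (Fin r → Fin d) ℂ) :
    ((tensorFam fun _ : Fin n => σ) * (ampAlong e A * ampAlong e' B)).trace =
      (σ * (condFirst hr σ A * condFirst hr σ B)).trace := by
  induction A using tensor_induction with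
  | add A A' hA hA' =>
    simp only [ampAlong_add, condFirst_add, mul_add, add_mul, Matrix.trace_add, hA, hA']
  | smul c A hA =>
    simp only [ampAlong_smul, condFirst_smul, mul_smul_comm, smul_mul_assoc, Matrix.trace_smul, hA]
  | tensor M =>
    induction B using tensor_induction with
    | add A A' hA hA' =>
      simp only [ampAlong_add, condFirst_add, mul_add, Matrix.trace_add, hA, hA']
    | smul c A hA =>
      simp only [ampAlong_smul, condFirst_smul, mul_smul_comm, Matrix.trace_smul, hA]
    | tensor N =>
      rw [condFirst_tensorFam hr σ hσ, condFirst_tensorFam hr σ hσ]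
      simp only [smul_mul_assoc, mul_smul_comm, Matrix.trace_smul, smul_eq_mul]
      simp only [← tensorFam_trace, ← tensorFam_mul]
      rw [← trace_tensorFam_mul_ampAlong he hσ (tensorFam (Function.update M _ _)),
        ← trace_tensorFam_mul_ampAlong he' hσ (tensorFam (Function.update N _ _))]
      simp only [ampAlong_tensorFam he, ampAlong_tensorFam he', tensorFam_mul, tensorFam_trace]
      rw [← mul_assoc, mul_comm (∏ i, _) (∏ i, _), ← Finset.prod_mul_distrib]
      have hc := Fintype.prod_ite_eq (e ⟨0, hr⟩) fun _ => (σ * (M ⟨0, hr⟩ * N ⟨0, hr⟩)).trace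
      rw [← hc, ← Finset.prod_mul_distrib]
      refine Finset.prod_congr rfl fun j _ => ?_
      by_cases hj : e ⟨0, hr⟩ = j
      · subst hj
        rw [if_pos rfl, he.extend_apply, he.extend_apply, h0, he'.extend_apply, he'.extend_apply]
        simp [hσ]
      · rw [if_neg hj, mul_one]
        by_cases h : ∃ i, e i = j
        · obtain ⟨i, rfl⟩ := h
          have hi : i ≠ ⟨0, hr⟩ := fun h => hj (by rw [h])
          have h' : ¬ ∃ i', e' i' = e i := fun ⟨i', h'⟩ => hi (hee i i' h'.symm)
          simp only [Function.extend_apply' _ _ _ h', mul_one, hσ, he.extend_apply,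
            Function.update_of_ne hi]
        · rw [Function.extend_apply' _ _ _ h, Function.extend_apply' _ _ _ h, one_mul, mul_one, hσ,
            one_mul]
          by_cases h' : ∃ i, e' i = j
          · obtain ⟨i, rfl⟩ := h'
            have hi : i ≠ ⟨0, hr⟩ := fun h => hj (by rw [h, h0])
            simp only [he'.extend_apply, Function.update_of_ne hi]
          · rw [Function.extend_apply' _ _ _ h', Function.extend_apply' _ _ _ h']

end Cond

/-! ### Entrywise derivatives of matrix-valued curves -/

/-- Entrywise differentiability of a matrix-valued curve. -/
def HasEntryDerivAt {ι : Type*} (F : ℝ → Matrix ι ι ℂ) (F' : Matrix ι ι ℂ) (s : ℝ) : Prop :=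
  ∀ i j, HasDerivAt (fun u => F u i j) (F' i j) s

section MatrixCurves

variable {ι : Type*} [Fintype ι]

lemma HasEntryDerivAt.mul {F G : ℝ → Matrix ι ι ℂ} {F' G' : Matrix ι ι ℂ} {s : ℝ}
    (hF : HasEntryDerivAt F F' s) (hG : HasEntryDerivAt G G' s) :
    HasEntryDerivAt (fun u => F u * G u) (F' * G s + F s * G') s := by
  intro i j
  simp only [Matrix.mul_apply, Matrix.add_apply, ← Finset.sum_add_distrib]
  exact HasDerivAt.fun_sum fun k _ => (hF i k).mul (hG k j)

omit [Fintype ι] in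
lemma hasEntryDerivAt_const (A : Matrix ι ι ℂ) (s : ℝ) : HasEntryDerivAt (fun _ => A) 0 s :=
  fun i j => by simpa using hasDerivAt_const s (A i j)

lemma HasEntryDerivAt.const_mul {F : ℝ → Matrix ι ι ℂ} {F' : Matrix ι ι ℂ} {s : ℝ}
    (A : Matrix ι ι ℂ) (hF : HasEntryDerivAt F F' s) :
    HasEntryDerivAt (fun u => A * F u) (A * F') s := by
  simpa using (hasEntryDerivAt_const A s).mul hF

lemma HasEntryDerivAt.trace {F : ℝ → Matrix ι ι ℂ} {F' : Matrix ι ι ℂ} {s : ℝ}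
    (hF : HasEntryDerivAt F F' s) : HasDerivAt (fun u => (F u).trace) F'.trace s :=
  HasDerivAt.fun_sum fun i _ => hF i i

omit [Fintype ι] in
lemma HasEntryDerivAt.comp_const_sub {F : ℝ → Matrix ι ι ℂ} {F' : Matrix ι ι ℂ} {s t : ℝ}
    (hF : HasEntryDerivAt F F' (t - s)) : HasEntryDerivAt (fun u => F (t - u)) (-F') s :=
  fun i j => by simpa using HasDerivAt.comp_const_sub t s (hF i j)

/-! ### The Cauchy–Schwarz inequality in a state -/

lemma norm_trace_mul_sq_le (X Y : Matrix ι ι ℂ) :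
    ‖(X * Y).trace‖ ^ 2 ≤ (X * Xᴴ).trace.re * (Yᴴ * Y).trace.re := by
  have hX : (X * Xᴴ).trace.re = ∑ p : ι × ι, ‖X p.1 p.2‖ ^ 2 := by
    simp only [Matrix.trace, Matrix.diag_apply, Matrix.mul_apply, Matrix.conjTranspose_apply,
      Complex.re_sum, Fintype.sum_prod_type]
    refine Finset.sum_congr rfl fun i _ => Finset.sum_congr rfl fun j _ => ?_
    rw [Complex.star_def, Complex.mul_conj, Complex.ofReal_re, Complex.normSq_eq_norm_sq]
  have hY : (Yᴴ * Y).trace.re = ∑ p : ι × ι, ‖Y p.2 p.1‖ ^ 2 := by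
    simp only [Matrix.trace, Matrix.diag_apply, Matrix.mul_apply, Matrix.conjTranspose_apply,
      Complex.re_sum, Fintype.sum_prod_type]
    refine Finset.sum_congr rfl fun i _ => Finset.sum_congr rfl fun j _ => ?_
    rw [mul_comm, Complex.star_def, Complex.mul_conj, Complex.ofReal_re, Complex.normSq_eq_norm_sq]
  have hXY : ‖(X * Y).trace‖ ≤ ∑ p : ι × ι, ‖X p.1 p.2‖ * ‖Y p.2 p.1‖ := by
    simp only [Matrix.trace, Matrix.diag_apply, Matrix.mul_apply, ← Fintype.sum_prod_type']
    exact (norm_sum_le _ _).trans_eq (Finset.sum_congr rfl fun p _ => norm_mul _ _)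
  rw [hX, hY]
  exact (pow_le_pow_left₀ (norm_nonneg _) hXY 2).trans (Finset.sum_mul_sq_le_sq_mul_sq _ _ _)

lemma norm_trace_state_mul_sq_le [DecidableEq ι] {R : Matrix ι ι ℂ} (hR : R.PosSemidef)
    (A B : Matrix ι ι ℂ) :
    ‖(R * (A * B)).trace‖ ^ 2 ≤ (R * (A * Aᴴ)).trace.re * (R * (Bᴴ * B)).trace.re := by
  obtain ⟨C, rfl⟩ := hR.exists_eq_conjTranspose_mul_self
  have h := norm_trace_mul_sq_le (C * A) (B * Cᴴ)
  have h1 : (C * A * (B * Cᴴ)).trace = (Cᴴ * C * (A * B)).trace := by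
    rw [Matrix.trace_mul_comm (Cᴴ * C), Matrix.trace_mul_comm, ← mul_assoc, Matrix.trace_mul_comm]
    simp only [mul_assoc]
  have h2 : (C * A * (C * A)ᴴ).trace = (Cᴴ * C * (A * Aᴴ)).trace := by
    rw [Matrix.conjTranspose_mul, ← mul_assoc, Matrix.trace_mul_comm]
    simp only [mul_assoc]
  have h3 : ((B * Cᴴ)ᴴ * (B * Cᴴ)).trace = (Cᴴ * C * (Bᴴ * B)).trace := by
    rw [Matrix.conjTranspose_mul, Matrix.conjTranspose_conjTranspose, Matrix.mul_assoc Cᴴ,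
      Matrix.trace_mul_comm Cᴴ]
    simp only [mul_assoc]
  rwa [h1, h2, h3] at h

/-! ### Unitary evolution and spectral measure of a Hermitian matrix -/

variable [DecidableEq ι]

/-- The unitary evolution `t ↦ exp (i t A)`. -/
noncomputable def evol {A : Matrix ι ι ℂ} (hA : A.IsHermitian) (t : ℝ) : Matrix ι ι ℂ :=
  (hA.eigenvectorUnitary : Matrix ι ι ℂ) *
    Matrix.diagonal (fun i => Complex.exp (t * hA.eigenvalues i * Complex.I)) *
    (hA.eigenvectorUnitary : Matrix ι ι ℂ)ᴴ

/-- The distribution of a measurement of `A` in the state `R`. -/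
noncomputable def measLaw {A : Matrix ι ι ℂ} (hA : A.IsHermitian) (R : Matrix ι ι ℂ) :
    Measure ℝ :=
  ∑ i, ENNReal.ofReal (((hA.eigenvectorUnitary : Matrix ι ι ℂ)ᴴ * R *
    (hA.eigenvectorUnitary : Matrix ι ι ℂ)) i i).re • Measure.dirac (hA.eigenvalues i)

end MatrixCurves

section Evolution

variable {ι : Type*} [Fintype ι] [DecidableEq ι] {A : Matrix ι ι ℂ} (hA : A.IsHermitian)

lemma eigenvectorUnitary_conjTranspose_mul :
    (hA.eigenvectorUnitary : Matrix ι ι ℂ)ᴴ * (hA.eigenvectorUnitary : Matrix ι ι ℂ) = 1 :=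
  Unitary.coe_star_mul_self hA.eigenvectorUnitary

lemma eigenvectorUnitary_mul_conjTranspose :
    (hA.eigenvectorUnitary : Matrix ι ι ℂ) * (hA.eigenvectorUnitary : Matrix ι ι ℂ)ᴴ = 1 :=
  Unitary.coe_mul_star_self hA.eigenvectorUnitary

lemma isHermitian_eq_conj_diagonal :
    A = (hA.eigenvectorUnitary : Matrix ι ι ℂ) *
      Matrix.diagonal (fun i => (hA.eigenvalues i : ℂ)) *
      (hA.eigenvectorUnitary : Matrix ι ι ℂ)ᴴ := by
  conv_lhs => rw [hA.spectral_theorem, Unitary.conjStarAlgAut_apply]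
  rfl

lemma conj_diagonal_mul_conj_diagonal (f g : ι → ℂ) :
    ((hA.eigenvectorUnitary : Matrix ι ι ℂ) * Matrix.diagonal f *
      (hA.eigenvectorUnitary : Matrix ι ι ℂ)ᴴ) *
    ((hA.eigenvectorUnitary : Matrix ι ι ℂ) * Matrix.diagonal g *
      (hA.eigenvectorUnitary : Matrix ι ι ℂ)ᴴ) =
    (hA.eigenvectorUnitary : Matrix ι ι ℂ) * Matrix.diagonal (fun i => f i * g i) *
      (hA.eigenvectorUnitary : Matrix ι ι ℂ)ᴴ := by
  rw [← Matrix.diagonal_mul_diagonal]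
  simp only [mul_assoc]
  rw [← mul_assoc (hA.eigenvectorUnitary : Matrix ι ι ℂ)ᴴ (hA.eigenvectorUnitary : Matrix ι ι ℂ),
    eigenvectorUnitary_conjTranspose_mul, one_mul]

lemma evol_zero : evol hA 0 = 1 := by
  simp [evol, eigenvectorUnitary_mul_conjTranspose]

lemma evol_conjTranspose (t : ℝ) : (evol hA t)ᴴ = evol hA (-t) := by
  simp only [evol, Matrix.conjTranspose_mul, Matrix.conjTranspose_conjTranspose,
    Matrix.diagonal_conjTranspose, mul_assoc]
  congr 3
  ext i
  simp [← Complex.exp_conj]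

lemma evol_mul_evol (s t : ℝ) : evol hA s * evol hA t = evol hA (s + t) := by
  simp only [evol, conj_diagonal_mul_conj_diagonal, ← Complex.exp_add]
  congr 3
  ext i
  push_cast
  ring_nf

lemma evol_mul_conjTranspose (t : ℝ) : evol hA t * (evol hA t)ᴴ = 1 := by
  rw [evol_conjTranspose, evol_mul_evol, add_neg_cancel, evol_zero]

lemma conjTranspose_mul_evol (t : ℝ) : (evol hA t)ᴴ * evol hA t = 1 := by
  rw [evol_conjTranspose, evol_mul_evol, neg_add_cancel, evol_zero]

lemma commute_evol (t : ℝ) : A * evol hA t = evol hA t * A := by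
  have h := isHermitian_eq_conj_diagonal hA
  refine (congrArg (· * evol hA t) h).trans (.trans ?_ (congrArg (evol hA t * ·) h).symm)
  simp only [evol, conj_diagonal_mul_conj_diagonal]
  simp only [mul_comm]

lemma hasEntryDerivAt_evol (t : ℝ) :
    HasEntryDerivAt (evol hA) (Complex.I • (A * evol hA t)) t := by
  have hd : HasEntryDerivAt
      (fun t : ℝ => Matrix.diagonal
        (fun i => Complex.exp (t * hA.eigenvalues i * Complex.I)))
      (Complex.I • (Matrix.diagonal (fun i => (hA.eigenvalues i : ℂ) *
        Complex.exp (t * hA.eigenvalues i * Complex.I)))) t := by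
    intro i j
    by_cases h : i = j
    · subst h
      simp only [Matrix.diagonal_apply_eq, Matrix.smul_apply, smul_eq_mul]
      have h1 : HasDerivAt (fun t : ℝ => (t : ℂ) * hA.eigenvalues i * Complex.I)
          (1 * hA.eigenvalues i * Complex.I) t :=
        ((Complex.ofRealCLM.hasDerivAt (x := t)).mul_const _).mul_const _
      convert h1.cexp using 1
      ring
    · simpa [h] using hasDerivAt_const t (0 : ℂ)
  have h := ((hasEntryDerivAt_const (hA.eigenvectorUnitary : Matrix ι ι ℂ) t).mul hd).mul
    (hasEntryDerivAt_const (hA.eigenvectorUnitary : Matrix ι ι ℂ)ᴴ t)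
  convert h using 1
  · rfl
  rw [mul_zero, add_zero, zero_mul, zero_add, mul_smul_comm, smul_mul_assoc,
    ← conj_diagonal_mul_conj_diagonal]
  exact congrArg (fun X => Complex.I • (X * evol hA t)) (isHermitian_eq_conj_diagonal hA)

lemma trace_mul_conj_diagonal (R : Matrix ι ι ℂ) (f : ι → ℂ) :
    (R * ((hA.eigenvectorUnitary : Matrix ι ι ℂ) * Matrix.diagonal f *
      (hA.eigenvectorUnitary : Matrix ι ι ℂ)ᴴ)).trace =
    ∑ i, ((hA.eigenvectorUnitary : Matrix ι ι ℂ)ᴴ * R *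
      (hA.eigenvectorUnitary : Matrix ι ι ℂ)) i i * f i := by
  rw [← mul_assoc, Matrix.trace_mul_comm, ← mul_assoc, ← mul_assoc]
  simp [Matrix.trace, Matrix.mul_diagonal]

variable {R : Matrix ι ι ℂ}

lemma conj_diag_eq_ofReal (hR : R.PosSemidef) (i : ι) :
    0 ≤ (((hA.eigenvectorUnitary : Matrix ι ι ℂ)ᴴ * R *
      (hA.eigenvectorUnitary : Matrix ι ι ℂ)) i i).re ∧
    ((hA.eigenvectorUnitary : Matrix ι ι ℂ)ᴴ * R *
      (hA.eigenvectorUnitary : Matrix ι ι ℂ)) i i =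
    ((((hA.eigenvectorUnitary : Matrix ι ι ℂ)ᴴ * R *
      (hA.eigenvectorUnitary : Matrix ι ι ℂ)) i i).re : ℂ) := by
  have h : 0 ≤ ((hA.eigenvectorUnitary : Matrix ι ι ℂ)ᴴ * R *
      (hA.eigenvectorUnitary : Matrix ι ι ℂ)) i i :=
    (hR.conjTranspose_mul_mul_same (hA.eigenvectorUnitary : Matrix ι ι ℂ)).diag_nonneg
  rw [Complex.le_def] at h
  exact ⟨h.1, Complex.ext rfl h.2.symm⟩

lemma integrable_measLaw {E : Type*} [NormedAddCommGroup E] (f : ℝ → E) :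
    Integrable f (measLaw hA R) :=
  integrable_finsetSum_measure.2 fun _ _ =>
    (integrable_dirac (by simp)).smul_measure ENNReal.ofReal_ne_top

lemma integral_measLaw (hR : R.PosSemidef) {E : Type*} [NormedAddCommGroup E] [NormedSpace ℝ E]
    [CompleteSpace E] (f : ℝ → E) :
    ∫ x, f x ∂(measLaw hA R) = ∑ i, (((hA.eigenvectorUnitary : Matrix ι ι ℂ)ᴴ * R *
      (hA.eigenvectorUnitary : Matrix ι ι ℂ)) i i).re • f (hA.eigenvalues i) := by
  rw [measLaw, integral_finsetSum_measure fun _ _ =>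
    (integrable_dirac (by simp)).smul_measure ENNReal.ofReal_ne_top]
  refine Finset.sum_congr rfl fun i _ => ?_
  rw [integral_smul_measure, integral_dirac, ENNReal.toReal_ofReal (conj_diag_eq_ofReal hA hR i).1]

lemma trace_mul_conj_diagonal_eq_integral (hR : R.PosSemidef) (f : ℝ → ℂ) :
    (R * ((hA.eigenvectorUnitary : Matrix ι ι ℂ) * Matrix.diagonal (fun i => f (hA.eigenvalues i)) *
      (hA.eigenvectorUnitary : Matrix ι ι ℂ)ᴴ)).trace = ∫ x, f x ∂(measLaw hA R) := by
  rw [trace_mul_conj_diagonal, integral_measLaw hA hR]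
  refine Finset.sum_congr rfl fun i _ => ?_
  rw [Complex.real_smul, ← (conj_diag_eq_ofReal hA hR i).2]

lemma trace_mul_cfc (hR : R.PosSemidef) (f : ℝ → ℝ) :
    (R * cfc f A).trace = ((∫ x, f x ∂(measLaw hA R) : ℝ) : ℂ) := by
  rw [hA.cfc_eq, Matrix.IsHermitian.cfc, Unitary.conjStarAlgAut_apply, ← integral_complex_ofReal]
  exact trace_mul_conj_diagonal_eq_integral hA hR (fun x => (f x : ℂ))

lemma charFun_measLaw (hR : R.PosSemidef) (t : ℝ) :
    charFun (measLaw hA R) t = (R * evol hA t).trace := by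
  rw [charFun_apply_real, ← trace_mul_conj_diagonal_eq_integral hA hR]
  rfl

lemma isProbabilityMeasure_measLaw (hR : R.PosSemidef) (hRt : R.trace = 1) :
    IsProbabilityMeasure (measLaw hA R) := by
  have hf : IsFiniteMeasure (measLaw hA R) := by
    rw [← integrable_const_iff_isFiniteMeasure (one_ne_zero (α := ℝ))]
    exact integrable_measLaw hA _
  have h := charFun_measLaw hA hR 0
  rw [evol_zero, mul_one, hRt, charFun_zero] at h
  have h' : (measLaw hA R).real Set.univ = 1 := by exact_mod_cast h
  rwa [measureReal_def, ENNReal.toReal_eq_one_iff, ← isProbabilityMeasure_iff] at h'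

lemma integral_id_measLaw (hR : R.PosSemidef) :
    ((∫ x, x ∂(measLaw hA R) : ℝ) : ℂ) = (R * A).trace := by
  rw [← integral_complex_ofReal, ← trace_mul_conj_diagonal_eq_integral hA hR (fun x => (x : ℂ)),
    ← isHermitian_eq_conj_diagonal]

lemma integral_sq_measLaw (hR : R.PosSemidef) :
    ((∫ x, x ^ 2 ∂(measLaw hA R) : ℝ) : ℂ) = (R * (A * A)).trace := by
  rw [← integral_complex_ofReal]
  push_cast
  rw [← trace_mul_conj_diagonal_eq_integral hA hR (fun x => (x : ℂ) ^ 2)]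
  simp only [pow_two]
  rw [← conj_diagonal_mul_conj_diagonal, ← isHermitian_eq_conj_diagonal]

/-- The central limit theorem for independent copies of a centred observable, in terms of
characteristic functions. -/
lemma tendsto_trace_evol_pow (hR : R.PosSemidef) (hRt : R.trace = 1) (hmean : (R * A).trace = 0)
    {v : ℝ} (hv : (R * (A * A)).trace = v) (t : ℝ) :
    Tendsto (fun n : ℕ => ((R * evol hA ((√n)⁻¹ * t)).trace) ^ n) atTop
      (𝓝 (Complex.exp (-(v * t ^ 2 / 2)))) := by
  have := isProbabilityMeasure_measLaw hA hR hRt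
  have hm : (∫ x, x ∂(measLaw hA R)) = 0 := by
    exact_mod_cast (integral_id_measLaw hA hR).trans hmean
  have hs : (∫ x, x ^ 2 ∂(measLaw hA R)) = v := by
    exact_mod_cast (integral_sq_measLaw hA hR).trans hv
  have hL : MemLp id 2 (measLaw hA R) :=
    (memLp_two_iff_integrable_sq (by fun_prop)).2 (integrable_measLaw hA _)
  have htay : (fun t : ℝ => charFun (measLaw hA R) t - (1 - v * t ^ 2 / 2)) =o[𝓝 0]
      fun t => t ^ 2 := by
    have h := taylorWithinEval_charFun_two_zero (P := measLaw hA R) (X := id) (by fun_prop)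
      (by simpa using hL)
    have h2 := taylor_isLittleO_univ (x₀ := 0) (n := 2) (contDiff_charFun hL)
    simp only [Measure.map_id, id, Pi.pow_apply, hm, hs] at h
    simp only [h] at h2
    simpa using h2
  simp_rw [← charFun_measLaw hA hR]
  apply Complex.tendsto_pow_exp_of_isLittleO_sub_add_div
  have h0 : Tendsto (fun n : ℕ => (√n)⁻¹ * t) atTop (𝓝 0) := by
    rw [← zero_mul t]
    exact .mul_const t (tendsto_inv_atTop_zero.comp <| Real.tendsto_sqrt_atTop.comp <|
      tendsto_natCast_atTop_atTop)
  have aux : (fun n : ℕ => ‖(1 / n : ℂ)‖) = fun n : ℕ => ‖(1 / n : ℝ)‖ := by simp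
  rw [← Asymptotics.isLittleO_norm_right, aux, Asymptotics.isLittleO_norm_right]
  refine .of_const_mul_right (c := t ^ 2) ?_
  refine (htay.comp_tendsto h0).congr (fun n => ?_) fun n => ?_
  · simp only [Function.comp, Complex.ofReal_mul, mul_pow]
    rw [← Complex.ofReal_pow, inv_pow, Real.sq_sqrt n.cast_nonneg]
    push_cast
    ring
  · simp only [Function.comp, mul_pow, inv_pow, Real.sq_sqrt n.cast_nonneg]
    ring

end Evolution

/-! ### Duhamel estimate -/

lemma norm_trace_evol_sub_le {ι : Type*} [Fintype ι] [DecidableEq ι] {R S T : Matrix ι ι ℂ}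
    (hS : S.IsHermitian) (hR : R.PosSemidef) (hRt : R.trace = 1) {W : ℝ → Matrix ι ι ℂ}
    (hW0 : W 0 = 1) (hW : ∀ s, HasEntryDerivAt W (Complex.I • (T * W s)) s) {c t : ℝ} (hc : 0 ≤ c)
    (hD : ∀ u, |u| ≤ |t| → (R * ((W u)ᴴ * ((S - T)ᴴ * (S - T)) * W u)).trace.re ≤ c ^ 2) :
    ‖(R * evol hS t).trace - (R * W t).trace‖ ≤ c * |t| := by
  have hd : ∀ s, HasDerivAt (fun s => (R * (evol hS s * W (t - s))).trace)
      (Complex.I * (R * (evol hS s * ((S - T) * W (t - s)))).trace) s := by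
    intro s
    have h := (((hasEntryDerivAt_evol hS s).mul (hW (t - s)).comp_const_sub).const_mul R).trace
    convert h using 1
    rw [commute_evol, ← smul_eq_mul, ← Matrix.trace_smul, ← mul_smul_comm]
    congr 2
    rw [sub_mul, mul_sub, smul_sub, sub_eq_add_neg]
    simp only [smul_mul_assoc, mul_smul_comm, mul_neg, mul_assoc]
  have hb : ∀ s ∈ Set.uIcc 0 t,
      ‖Complex.I * (R * (evol hS s * ((S - T) * W (t - s)))).trace‖ ≤ c := by
    intro s hs
    rw [norm_mul, Complex.norm_I, one_mul]
    refine le_of_sq_le_sq ((norm_trace_state_mul_sq_le hR _ _).trans ?_) hc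
    rw [evol_mul_conjTranspose, mul_one, hRt, Complex.one_re, one_mul,
      Matrix.conjTranspose_mul, mul_assoc, ← mul_assoc (S - T)ᴴ, ← mul_assoc (W _)ᴴ]
    exact hD _ (by simpa using Set.abs_sub_right_of_mem_uIcc hs)
  have h := (convex_uIcc 0 t).norm_image_sub_le_of_norm_hasDerivWithin_le
    (fun s _ => (hd s).hasDerivWithinAt) hb Set.left_mem_uIcc Set.right_mem_uIcc
  simpa [evol_zero, hW0] using h

/-! ### Product evolutions -/

section Product

variable {d : ℕ} {A : Matrix (Fin d) (Fin d) ℂ} (hA : A.IsHermitian)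

lemma hasEntryDerivAt_tensorFam {n : ℕ} {F : Fin n → ℝ → Matrix (Fin d) (Fin d) ℂ}
    {F' : Fin n → Matrix (Fin d) (Fin d) ℂ} {s : ℝ} (hF : ∀ i, HasEntryDerivAt (F i) (F' i) s) :
    HasEntryDerivAt (fun u => tensorFam fun i => F i u)
      (∑ i, tensorFam (Function.update (fun j => F j s) i (F' i))) s := by
  intro x y
  have h := HasDerivAt.fun_finsetProd (u := Finset.univ) fun i _ => hF i (x i) (y i)
  refine HasDerivAt.congr_deriv h ?_
  rw [Matrix.sum_apply]
  refine Finset.sum_congr rfl fun i _ => ?_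
  rw [tensorFam, Matrix.of_apply, ← Finset.mul_prod_erase _ _ (Finset.mem_univ i), mul_comm,
    Function.update_self, smul_eq_mul]
  congr 1
  refine Finset.prod_congr rfl fun j hj => ?_
  rw [Function.update_of_ne (Finset.ne_of_mem_erase hj)]

lemma siteOp_mul_tensorFam {n : ℕ} (i : Fin n) (a : Matrix (Fin d) (Fin d) ℂ)
    (M : Fin n → Matrix (Fin d) (Fin d) ℂ) :
    siteOp i a * tensorFam M = tensorFam (Function.update M i (a * M i)) := by
  rw [siteOp, tensorFam_mul]
  congr 1
  ext1 j
  by_cases h : j = i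
  · subst h; simp
  · simp [h]

lemma tensorFam_update_smul {n : ℕ} (i : Fin n) (c : ℂ) (a : Matrix (Fin d) (Fin d) ℂ)
    (M : Fin n → Matrix (Fin d) (Fin d) ℂ) :
    tensorFam (Function.update M i (c • a)) = c • tensorFam (Function.update M i a) := by
  ext x y
  simp only [tensorFam, Matrix.of_apply, Matrix.smul_apply, smul_eq_mul]
  rw [← Finset.mul_prod_erase _ _ (Finset.mem_univ i),
    ← Finset.mul_prod_erase Finset.univ _ (Finset.mem_univ i)]
  simp only [Function.update_self, Matrix.smul_apply, smul_eq_mul, mul_assoc]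
  congr 2
  refine Finset.prod_congr rfl fun j hj => ?_
  simp [Function.update_of_ne (Finset.ne_of_mem_erase hj)]

/-- The evolution generated by `c` times the sum of the copies of `A`. -/
noncomputable def prodEvol (n : ℕ) (c u : ℝ) : Matrix (Fin n → Fin d) (Fin n → Fin d) ℂ :=
  tensorFam fun _ : Fin n => evol hA (c * u)

lemma prodEvol_zero (n : ℕ) (c : ℝ) : prodEvol hA n c 0 = 1 := by
  simp [prodEvol, evol_zero, tensorFam_one]

lemma hasEntryDerivAt_prodEvol (n : ℕ) (c s : ℝ) :
    HasEntryDerivAt (prodEvol hA n c)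
      (Complex.I • (((c : ℂ) • ∑ i : Fin n, siteOp i A) * prodEvol hA n c s)) s := by
  have h1 : HasEntryDerivAt (fun u => evol hA (c * u))
      ((c * Complex.I) • (A * evol hA (c * s))) s := by
    intro i j
    have h := HasDerivAt.scomp s (hasEntryDerivAt_evol hA (c * s) i j)
      ((hasDerivAt_id s).const_mul c)
    refine HasDerivAt.congr_deriv h ?_
    simp [mul_assoc]
  have h2 := hasEntryDerivAt_tensorFam fun _ : Fin n => h1
  suffices h : Complex.I • (((c : ℂ) • ∑ i : Fin n, siteOp i A) * prodEvol hA n c s) = _ from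
    h ▸ h2
  rw [prodEvol, smul_mul_assoc, smul_smul, Finset.sum_mul, Finset.smul_sum, mul_comm]
  refine Finset.sum_congr rfl fun i _ => ?_
  rw [siteOp_mul_tensorFam, ← tensorFam_update_smul]

lemma trace_mul_prodEvol {ρ : Matrix (Fin d) (Fin d) ℂ} (n : ℕ) (c u : ℝ) :
    ((tensorFam fun _ : Fin n => ρ) * prodEvol hA n c u).trace =
      ((ρ * evol hA (c * u)).trace) ^ n := by
  simp [prodEvol, tensorFam_mul, tensorFam_trace]

/-- The state `ρ` evolved by `A`. -/
noncomputable def evolState (ρ : Matrix (Fin d) (Fin d) ℂ) (s : ℝ) : Matrix (Fin d) (Fin d) ℂ :=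
  evol hA s * ρ * (evol hA s)ᴴ

variable {ρ : Matrix (Fin d) (Fin d) ℂ}

lemma trace_mul_conj_prodEvol (n : ℕ) (c u : ℝ) (X : Matrix (Fin n → Fin d) (Fin n → Fin d) ℂ) :
    ((tensorFam fun _ : Fin n => ρ) *
      ((prodEvol hA n c u)ᴴ * X * prodEvol hA n c u)).trace =
    ((tensorFam fun _ : Fin n => evolState hA ρ (c * u)) * X).trace := by
  have h : (tensorFam fun _ : Fin n => evolState hA ρ (c * u)) =
      prodEvol hA n c u * (tensorFam fun _ : Fin n => ρ) * (prodEvol hA n c u)ᴴ := by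
    simp [prodEvol, tensorFam_conjTranspose, tensorFam_mul, evolState]
  rw [h, ← mul_assoc, Matrix.trace_mul_comm]
  simp only [mul_assoc]

lemma evolState_zero : evolState hA ρ 0 = ρ := by
  simp [evolState, evol_zero]

lemma evolState_posSemidef (hρ : ρ.PosSemidef) (s : ℝ) : (evolState hA ρ s).PosSemidef :=
  hρ.mul_mul_conjTranspose_same _

lemma evolState_trace (s : ℝ) : (evolState hA ρ s).trace = ρ.trace := by
  rw [evolState, Matrix.trace_mul_comm, ← mul_assoc, conjTranspose_mul_evol, one_mul]

lemma exists_hasEntryDerivAt_evolState (s : ℝ) :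
    ∃ ρ', HasEntryDerivAt (evolState hA ρ) ρ' s := by
  have h : HasEntryDerivAt (fun u => (evol hA u)ᴴ) (-(Complex.I • (A * evol hA (0 - s)))) s := by
    simpa [evol_conjTranspose] using (hasEntryDerivAt_evol hA (0 - s)).comp_const_sub
  exact ⟨_, ((hasEntryDerivAt_evol hA s).mul (hasEntryDerivAt_const ρ s)).mul h⟩

end Product

/-! ### Symmetric kernels and Hoeffding projections -/

section Kernel

variable {d r : ℕ}

lemma ampAlong_perm_apply (τ : Equiv.Perm (Fin r)) (K : Matrix (Fin r → Fin d) (Fin r → Fin d) ℂ)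
    (x y : Fin r → Fin d) : ampAlong τ K x y = K (x ∘ τ) (y ∘ τ) := by
  simp [ampAlong, Finset.image_univ_of_surjective τ.surjective]

lemma ampAlong_comp_perm {n : ℕ} (e : Fin r → Fin n) (τ : Equiv.Perm (Fin r))
    (K : Matrix (Fin r → Fin d) (Fin r → Fin d) ℂ) :
    ampAlong (e ∘ τ) K = ampAlong e (ampAlong τ K) := by
  ext x y
  have h : Finset.univ.image (e ∘ τ) = Finset.univ.image e := by
    rw [← Finset.image_image, Finset.image_univ_of_surjective τ.surjective]
  simp only [ampAlong, Matrix.of_apply, h]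
  simp [Finset.image_univ_of_surjective τ.surjective, Function.comp_assoc]

lemma trace_ampAlong_perm (τ : Equiv.Perm (Fin r))
    (K : Matrix (Fin r → Fin d) (Fin r → Fin d) ℂ) : (ampAlong τ K).trace = K.trace := by
  simp only [Matrix.trace, Matrix.diag_apply, ampAlong_perm_apply]
  exact Fintype.sum_equiv (Equiv.arrowCongr τ.symm (Equiv.refl _)) _ _ fun _ => rfl

lemma trace_tensorFam_update_mul {σ a : Matrix (Fin d) (Fin d) ℂ}
    {K : Matrix (Fin r → Fin d) (Fin r → Fin d) ℂ} (hK : ∀ τ : Equiv.Perm (Fin r), ampAlong τ K = K)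
    (hr : 0 < r) (i : Fin r) :
    (tensorFam (Function.update (fun _ => σ) i a) * K).trace = (a * condFirst hr σ K).trace := by
  rw [trace_mul_condFirst, ← trace_ampAlong_perm (Equiv.swap i ⟨0, hr⟩),
    ← ampAlong_mul (Equiv.injective _), hK, ampAlong_tensorFam (Equiv.injective _)]
  congr 3
  ext1 j
  obtain ⟨j, rfl⟩ := (Equiv.swap i ⟨0, hr⟩).surjective j
  rw [(Equiv.injective _).extend_apply]
  by_cases h : j = i
  · subst h; simp
  · rw [Function.update_of_ne h, Function.update_of_ne fun hj =>
      h ((Equiv.injective _) (hj.trans (Equiv.swap_apply_left _ _).symm))]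

lemma condFirst_conjTranspose (hr : 0 < r) {σ : Matrix (Fin d) (Fin d) ℂ} (hσ : σ.IsHermitian)
    (A : Matrix (Fin r → Fin d) (Fin r → Fin d) ℂ) :
    (condFirst hr σ A)ᴴ = condFirst hr σ Aᴴ := by
  ext x y
  rw [Matrix.conjTranspose_apply, condFirst_apply, condFirst_apply, ← Matrix.trace_conjTranspose,
    Matrix.conjTranspose_mul, Matrix.trace_mul_comm, tensorFam_conjTranspose]
  congr 3
  ext1 j
  by_cases h : j = ⟨0, hr⟩
  · subst h; simp
  · simp [h, hσ.eq]

lemma trace_mul_eq_re {ι : Type*} [Fintype ι] {A B : Matrix ι ι ℂ} (hA : A.IsHermitian)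
    (hB : B.IsHermitian) : star (A * B).trace = (A * B).trace := by
  rw [← Matrix.trace_conjTranspose, Matrix.conjTranspose_mul, hA.eq, hB.eq, Matrix.trace_mul_comm]

lemma siteOp_isHermitian {n : ℕ} (i : Fin n) {a : Matrix (Fin d) (Fin d) ℂ} (ha : a.IsHermitian) :
    (siteOp i a).IsHermitian := by
  rw [Matrix.IsHermitian, siteOp, tensorFam_conjTranspose]
  congr 1
  ext1 j
  by_cases h : j = i
  · subst h; simp [ha.eq]
  · simp [h]

variable (hr : 0 < r) {ρ : Matrix (Fin d) (Fin d) ℂ} {K : Matrix (Fin r → Fin d) (Fin r → Fin d) ℂ}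

lemma firstHoef_eq : firstHoef hr ρ K = condFirst hr ρ K -
    ((tensorFam fun _ : Fin r => ρ) * K).trace • (1 : Matrix (Fin d) (Fin d) ℂ) := rfl

lemma trace_mul_condFirst_self :
    (ρ * condFirst hr ρ K).trace = ((tensorFam fun _ : Fin r => ρ) * K).trace := by
  rw [trace_mul_condFirst, Function.update_eq_self (a := (⟨0, hr⟩ : Fin r)) (f := fun _ => ρ)]

lemma trace_mul_firstHoef (hρ : ρ.trace = 1) : (ρ * firstHoef hr ρ K).trace = 0 := by
  rw [firstHoef_eq, mul_sub, Matrix.trace_sub, trace_mul_condFirst_self]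
  simp [hρ]

lemma firstHoef_isHermitian (hρ : ρ.PosSemidef) (hK : K.IsHermitian) :
    (firstHoef hr ρ K).IsHermitian := by
  rw [Matrix.IsHermitian, firstHoef_eq, Matrix.conjTranspose_sub, Matrix.conjTranspose_smul,
    condFirst_conjTranspose hr hρ.1, hK.eq, trace_mul_eq_re (tensorFam_posSemidef hρ).1 hK,
    Matrix.conjTranspose_one]

/-- The kernel obtained by removing the Hoeffding components of order at most one. -/
noncomputable def higherHoef (hr : 0 < r) (ρ : Matrix (Fin d) (Fin d) ℂ)
    (K : Matrix (Fin r → Fin d) (Fin r → Fin d) ℂ) : Matrix (Fin r → Fin d) (Fin r → Fin d) ℂ :=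
  K - ((tensorFam fun _ : Fin r => ρ) * K).trace • 1 - ∑ j, siteOp j (firstHoef hr ρ K)

lemma higherHoef_isHermitian (hρ : ρ.PosSemidef) (hK : K.IsHermitian) :
    (higherHoef hr ρ K).IsHermitian := by
  rw [Matrix.IsHermitian, higherHoef, Matrix.conjTranspose_sub, Matrix.conjTranspose_sub,
    Matrix.conjTranspose_smul, hK.eq, trace_mul_eq_re (tensorFam_posSemidef hρ).1 hK,
    Matrix.conjTranspose_one, Matrix.conjTranspose_sum]
  simp only [(siteOp_isHermitian _ (firstHoef_isHermitian hr hρ hK)).eq]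

lemma ampAlong_higherHoef {n : ℕ} {e : Fin r → Fin n} (he : Function.Injective e) :
    ampAlong e (higherHoef hr ρ K) =
      ampAlong e K - ((tensorFam fun _ : Fin r => ρ) * K).trace • 1 -
        ∑ j, siteOp (e j) (firstHoef hr ρ K) := by
  simp only [← ampLin_apply, higherHoef, map_sub, map_smul, map_sum]
  simp only [ampLin_apply, ampAlong_one he, ampAlong_siteOp he]

lemma ampAlong_perm_higherHoef (hK : ∀ τ : Equiv.Perm (Fin r), ampAlong τ K = K)
    (τ : Equiv.Perm (Fin r)) : ampAlong τ (higherHoef hr ρ K) = higherHoef hr ρ K := by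
  rw [ampAlong_higherHoef hr τ.injective, hK, higherHoef,
    Equiv.sum_comp τ fun j => siteOp j (firstHoef hr ρ K)]

lemma condFirst_higherHoef (hρ : ρ.trace = 1) : condFirst hr ρ (higherHoef hr ρ K) = 0 := by
  refine Matrix.ext_iff_trace_mul_left.2 fun a => ?_
  have h0 : ∀ b j, (tensorFam (Function.update (fun _ : Fin r => ρ) ⟨0, hr⟩ a) *
      siteOp j b).trace = ∏ i, (Function.update (Function.update (fun _ : Fin r => ρ) ⟨0, hr⟩ a) j
        (b * Function.update (fun _ : Fin r => ρ) ⟨0, hr⟩ a j) i).trace := by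
    intro b j
    rw [Matrix.trace_mul_comm, siteOp_mul_tensorFam, tensorFam_trace]
  have h1 : ∑ j, (tensorFam (Function.update (fun _ : Fin r => ρ) ⟨0, hr⟩ a) *
      siteOp j (firstHoef hr ρ K)).trace = (a * firstHoef hr ρ K).trace := by
    rw [Finset.sum_eq_single ⟨0, hr⟩ (fun j _ hj => ?_) (by simp), h0,
      Finset.prod_eq_single ⟨0, hr⟩ (fun i _ hi => ?_) (by simp)]
    · simp [Matrix.trace_mul_comm a]
    · simp [hi, hρ]
    · rw [h0]
      refine Finset.prod_eq_zero (Finset.mem_univ j) ?_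
      simp [hj, Matrix.trace_mul_comm _ ρ, trace_mul_firstHoef hr hρ]
  have h2 : (tensorFam (Function.update (fun _ : Fin r => ρ) ⟨0, hr⟩ a)).trace = a.trace := by
    rw [tensorFam_trace, Finset.prod_eq_single ⟨0, hr⟩ (fun i _ hi => ?_) (by simp)]
    · simp
    · simp [hi, hρ]
  rw [trace_mul_condFirst, higherHoef, mul_sub, mul_sub, Matrix.trace_sub, Matrix.trace_sub,
    Finset.mul_sum, Matrix.trace_sum, h1, mul_smul_comm, Matrix.trace_smul, mul_one, h2,
    firstHoef_eq, mul_sub, Matrix.trace_sub, trace_mul_condFirst]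
  simp

end Kernel

/-! ### Variance of the remainder -/

section Variance

variable {d r n : ℕ}

lemma ampl_eq_ampAlong (K : Matrix (Fin r → Fin d) (Fin r → Fin d) ℂ) (β : Finset (Fin n))
    (hβ : β.card = r) : ampl K β hβ = ampAlong (β.orderEmbOfFin hβ) K := by
  ext x y
  rw [ampl, ampAlong, Finset.image_orderEmbOfFin_univ]
  rfl

variable {H : Matrix (Fin r → Fin d) (Fin r → Fin d) ℂ} {σ : Matrix (Fin d) (Fin d) ℂ}
  {β β' : Finset (Fin n)}

lemma trace_ampl_mul_ampl_of_disjoint (hσ : σ.trace = 1) (hβ : β.card = r) (hβ' : β'.card = r)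
    (h : Disjoint β β') :
    ((tensorFam fun _ : Fin n => σ) * (ampl H β hβ * ampl H β' hβ')).trace =
      ((tensorFam fun _ : Fin r => σ) * H).trace ^ 2 := by
  rw [ampl_eq_ampAlong, ampl_eq_ampAlong, pow_two]
  refine trace_tensorFam_mul_ampAlong_mul_of_disjoint (RelEmbedding.injective _)
    (RelEmbedding.injective _) ?_ hσ _ _
  simpa using h

lemma trace_ampl_mul_ampl_of_inter (hr : 0 < r)
    (hH : ∀ τ : Equiv.Perm (Fin r), ampAlong τ H = H) (hσ : σ.trace = 1)
    (hβ : β.card = r) (hβ' : β'.card = r) {k : Fin n} (h : β ∩ β' = {k}) :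
    ((tensorFam fun _ : Fin n => σ) * (ampl H β hβ * ampl H β' hβ')).trace =
      (σ * (condFirst hr σ H * condFirst hr σ H)).trace := by
  have hk : k ∈ β ∩ β' := by simp [h]
  rw [Finset.mem_inter] at hk
  obtain ⟨i, hi⟩ : ∃ i, β.orderEmbOfFin hβ i = k := by
    rw [← Set.mem_range, Finset.range_orderEmbOfFin]; exact hk.1
  obtain ⟨i', hi'⟩ : ∃ i, β'.orderEmbOfFin hβ' i = k := by
    rw [← Set.mem_range, Finset.range_orderEmbOfFin]; exact hk.2
  have h1 : ampl H β hβ =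
      ampAlong (β.orderEmbOfFin hβ ∘ Equiv.swap ⟨0, hr⟩ i) H := by
    rw [ampAlong_comp_perm, hH, ampl_eq_ampAlong]
  have h2 : ampl H β' hβ' =
      ampAlong (β'.orderEmbOfFin hβ' ∘ Equiv.swap ⟨0, hr⟩ i') H := by
    rw [ampAlong_comp_perm, hH, ampl_eq_ampAlong]
  rw [h1, h2]
  refine trace_tensorFam_mul_ampAlong_mul_of_inter hr
    ((RelEmbedding.injective _).comp (Equiv.injective _))
    ((RelEmbedding.injective _).comp (Equiv.injective _)) (by simp [hi, hi'])
    (fun j j' hj => ?_) hσ H H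
  have hm : β.orderEmbOfFin hβ (Equiv.swap ⟨0, hr⟩ i j) ∈ β ∩ β' :=
    Finset.mem_inter.2 ⟨Finset.orderEmbOfFin_mem _ _ _, by
      simp only [Function.comp] at hj
      rw [hj]; exact Finset.orderEmbOfFin_mem _ _ _⟩
  rw [h, Finset.mem_singleton, ← hi, (RelEmbedding.injective _).eq_iff] at hm
  exact (Equiv.injective (Equiv.swap ⟨0, hr⟩ i)) (hm.trans (Equiv.swap_apply_left _ _).symm)

lemma norm_trace_ampl_mul_ampl_le (hH : H.IsHermitian) (hσ : σ.PosSemidef) (hσt : σ.trace = 1)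
    (hβ : β.card = r) (hβ' : β'.card = r) {M : ℝ}
    (hM : ((tensorFam fun _ : Fin r => σ) * (H * H)).trace.re ≤ M) (hM0 : 0 ≤ M) :
    ‖((tensorFam fun _ : Fin n => σ) * (ampl H β hβ * ampl H β' hβ')).trace‖ ≤ M := by
  have hsq : ∀ (β : Finset (Fin n)) (hβ : β.card = r),
      ((tensorFam fun _ : Fin n => σ) * (ampl H β hβ * ampl H β hβ)).trace.re ≤ M := by
    intro β hβ
    rwa [ampl_eq_ampAlong, ampAlong_mul (RelEmbedding.injective _),
      trace_tensorFam_mul_ampAlong (RelEmbedding.injective _) hσt]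
  have hh : ∀ (β : Finset (Fin n)) (hβ : β.card = r), (ampl H β hβ)ᴴ = ampl H β hβ := by
    intro β hβ
    rw [ampl_eq_ampAlong, ampAlong_conjTranspose, hH.eq]
  refine le_of_sq_le_sq ((norm_trace_state_mul_sq_le (tensorFam_posSemidef hσ) _ _).trans ?_) hM0
  rw [hh, hh, pow_two M]
  have h0 : 0 ≤ ((tensorFam fun _ : Fin n => σ) * (ampl H β' hβ' * ampl H β' hβ')).trace.re := by
    obtain ⟨C, hC⟩ := (tensorFam_posSemidef (n := n) hσ).exists_eq_conjTranspose_mul_self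
    have h : (Cᴴ * C * (ampl H β' hβ' * ampl H β' hβ')).trace =
        (C * ampl H β' hβ' * (C * ampl H β' hβ')ᴴ).trace := by
      rw [Matrix.conjTranspose_mul, hh, mul_assoc, Matrix.trace_mul_comm]
      simp only [mul_assoc]
    rw [hC, h]
    exact (Complex.le_def.1 (Matrix.posSemidef_self_mul_conjTranspose _).trace_nonneg).1
  exact mul_le_mul (hsq _ _) (hsq _ _) h0 hM0

lemma norm_trace_ampl_mul_ampl_le_sum (hr : 0 < r)
    (hS : ∀ τ : Equiv.Perm (Fin r), ampAlong τ H = H)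
    (hH : H.IsHermitian) (hσ : σ.PosSemidef) (hσt : σ.trace = 1)
    {a b M : ℝ} (ha : ‖((tensorFam fun _ : Fin r => σ) * H).trace‖ ≤ a)
    (hb : ‖(σ * (condFirst hr σ H * condFirst hr σ H)).trace‖ ≤ b)
    (hM : ((tensorFam fun _ : Fin r => σ) * (H * H)).trace.re ≤ M) (hM0 : 0 ≤ M)
    (hβ : β.card = r) (hβ' : β'.card = r) :
    ‖((tensorFam fun _ : Fin n => σ) * (ampl H β hβ * ampl H β' hβ')).trace‖ ≤
      a ^ 2 + b * ∑ k : Fin n, (if k ∈ β then 1 else 0) * (if k ∈ β' then 1 else 0) +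
      M * ∑ p ∈ (Finset.univ : Finset (Fin n)).offDiag,
        (if {p.1, p.2} ⊆ β then 1 else 0) * (if {p.1, p.2} ⊆ β' then 1 else 0) := by
  have hb0 : 0 ≤ b := (norm_nonneg _).trans hb
  have hsb : 0 ≤ b * ∑ k : Fin n,
      ((if k ∈ β then 1 else 0) * (if k ∈ β' then 1 else 0) : ℝ) := by positivity
  have hsM : 0 ≤ M * ∑ p ∈ (Finset.univ : Finset (Fin n)).offDiag,
      ((if {p.1, p.2} ⊆ β then 1 else 0) * (if {p.1, p.2} ⊆ β' then 1 else 0) : ℝ) := by positivity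
  have ha2 : 0 ≤ a ^ 2 := by positivity
  rcases (β ∩ β').eq_empty_or_nonempty with h | ⟨k, hk⟩
  · rw [trace_ampl_mul_ampl_of_disjoint hσt hβ hβ' (Finset.disjoint_iff_inter_eq_empty.2 h),
      norm_pow]
    have := pow_le_pow_left₀ (norm_nonneg _) ha 2
    linarith
  · by_cases h : β ∩ β' = {k}
    · rw [trace_ampl_mul_ampl_of_inter hr hS hσt hβ hβ' h]
      have h1 : (1 : ℝ) ≤ ∑ k : Fin n, (if k ∈ β then 1 else 0) * (if k ∈ β' then 1 else 0) := by
        refine le_trans ?_ (Finset.single_le_sum (fun i _ => ?_) (Finset.mem_univ k))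
        · rw [Finset.mem_inter] at hk
          simp [hk]
        · positivity
      have := le_mul_of_one_le_right hb0 h1
      linarith
    · obtain ⟨l, hl, hlk⟩ : ∃ l ∈ β ∩ β', l ≠ k := by
        by_contra! hc
        exact h (Finset.eq_singleton_iff_unique_mem.2 ⟨hk, hc⟩)
      have h1 : (1 : ℝ) ≤ ∑ p ∈ (Finset.univ : Finset (Fin n)).offDiag,
          (if {p.1, p.2} ⊆ β then 1 else 0) * (if {p.1, p.2} ⊆ β' then 1 else 0) := by
        refine le_trans ?_ (Finset.single_le_sum (a := (l, k)) (fun i _ => ?_) (by simpa using hlk))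
        · rw [Finset.mem_inter] at hk hl
          simp [Finset.insert_subset_iff, hk, hl]
        · positivity
      have := le_mul_of_one_le_right hM0 h1
      have := norm_trace_ampl_mul_ampl_le hH hσ hσt hβ hβ' hM hM0
      linarith

end Variance

section Counting

variable {r n : ℕ}

lemma mul_card_filter_mem_powersetCard (hr : 0 < r) (i : Fin n) :
    n * {β ∈ (Finset.univ : Finset (Fin n)).powersetCard r | i ∈ β}.card = r * n.choose r := by
  have h := Finset.card_filter_powersetCard_subset {i} (Finset.univ : Finset (Fin n)) r
    (Finset.subset_univ _) (by simpa using Nat.succ_le_of_lt hr)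
  simp only [Finset.singleton_subset_iff, Finset.card_univ, Fintype.card_fin,
    Finset.card_singleton] at h
  rw [h]
  obtain ⟨q, rfl⟩ := Nat.exists_eq_add_of_le' hr
  obtain ⟨m, rfl⟩ := Nat.exists_eq_add_of_le' i.pos
  rw [mul_comm (q + 1)]
  exact Nat.add_one_mul_choose_eq m q

lemma mul_card_filter_pair_powersetCard_le {i j : Fin n} (hij : i ≠ j) :
    n * (n - 1) * {β ∈ (Finset.univ : Finset (Fin n)).powersetCard r | {i, j} ⊆ β}.card ≤
      r ^ 2 * n.choose r := by
  have hc : ({i, j} : Finset (Fin n)).card = 2 := Finset.card_pair hij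
  have hn : 2 ≤ n := by simpa [hc] using Finset.card_le_univ ({i, j} : Finset (Fin n))
  rcases lt_or_ge r 2 with h2 | h2
  · rw [Finset.filter_false_of_mem fun β hβ hs => ?_]
    · simp
    · have := Finset.card_le_card hs
      rw [(Finset.mem_powersetCard.1 hβ).2] at this
      omega
  · rw [Finset.card_filter_powersetCard_subset _ _ _ (Finset.subset_univ _) (hc.trans_le h2), hc,
      Finset.card_univ, Fintype.card_fin]
    obtain ⟨q, rfl⟩ := Nat.exists_eq_add_of_le' h2
    obtain ⟨m, rfl⟩ := Nat.exists_eq_add_of_le' hn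
    have e1 := Nat.add_one_mul_choose_eq m q
    have e2 := Nat.add_one_mul_choose_eq (m + 1) (q + 1)
    calc (m + 2) * (m + 2 - 1) * (m + 2 - 2).choose (q + 2 - 2)
        = (m + 1 + 1) * ((m + 1) * m.choose q) := by
          simp only [Nat.add_sub_cancel, show m + 2 - 1 = m + 1 from rfl]; ring
      _ = (m + 2).choose (q + 2) * ((q + 2) * (q + 1)) := by
          rw [e1, ← mul_assoc, e2]; ring
      _ ≤ (q + 2) ^ 2 * (m + 2).choose (q + 2) := by
          rw [mul_comm, pow_two]
          gcongr
          omega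

lemma sum_sum_sum_mul_indicator {ι κ : Type*} (P : Finset ι) (Q : Finset κ) (p : κ → ι → Prop)
    [∀ k, DecidablePred (p k)] :
    ∑ β ∈ P, ∑ β' ∈ P, ∑ k ∈ Q, ((if p k β then 1 else 0) * (if p k β' then 1 else 0) : ℝ) =
      ∑ k ∈ Q, ((P.filter (p k)).card : ℝ) ^ 2 := by
  rw [Finset.sum_congr rfl fun β _ => Finset.sum_comm, Finset.sum_comm]
  refine Finset.sum_congr rfl fun k _ => ?_
  rw [← Finset.sum_mul_sum, Finset.sum_boole, pow_two]

lemma sum_sq_card_filter_mem_powersetCard (hr : 0 < r) :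
    (n : ℝ) * ∑ i : Fin n,
      ({β ∈ (Finset.univ : Finset (Fin n)).powersetCard r | i ∈ β}.card : ℝ) ^ 2 =
      (r : ℝ) ^ 2 * (n.choose r : ℝ) ^ 2 := by
  rcases Nat.eq_zero_or_pos n with rfl | hn
  · simp [Nat.choose_eq_zero_of_lt hr]
  have hn' : (n : ℝ) ≠ 0 := by positivity
  have h : ∀ i : Fin n, ({β ∈ (Finset.univ : Finset (Fin n)).powersetCard r | i ∈ β}.card : ℝ) =
      r * n.choose r / n := fun i => by
    rw [eq_div_iff hn', mul_comm]
    exact_mod_cast mul_card_filter_mem_powersetCard hr i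
  simp only [h, Finset.sum_const, Finset.card_univ, Fintype.card_fin, nsmul_eq_mul]
  field_simp

lemma sum_sq_card_filter_pair_powersetCard_le (hn : 2 ≤ n) :
    (n : ℝ) * (n - 1) * ∑ p ∈ (Finset.univ : Finset (Fin n)).offDiag,
      ({β ∈ (Finset.univ : Finset (Fin n)).powersetCard r | {p.1, p.2} ⊆ β}.card : ℝ) ^ 2 ≤
      (r : ℝ) ^ 4 * (n.choose r : ℝ) ^ 2 := by
  have hn' : (0 : ℝ) < n * (n - 1) := by
    have : (2 : ℝ) ≤ n := by exact_mod_cast hn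
    nlinarith
  have h : ∀ p ∈ (Finset.univ : Finset (Fin n)).offDiag,
      ({β ∈ (Finset.univ : Finset (Fin n)).powersetCard r | {p.1, p.2} ⊆ β}.card : ℝ) ^ 2 ≤
      (r ^ 2 * n.choose r / (n * (n - 1))) ^ 2 := fun p hp => by
    refine pow_le_pow_left₀ (by positivity) ?_ 2
    rw [le_div_iff₀ hn', mul_comm]
    have := mul_card_filter_pair_powersetCard_le (r := r) (Finset.mem_offDiag.1 hp).2.2
    have h1 : ((n - 1 : ℕ) : ℝ) = n - 1 := by rw [Nat.cast_sub (by omega), Nat.cast_one]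
    rw [← h1]
    exact_mod_cast this
  refine (mul_le_mul_of_nonneg_left (Finset.sum_le_sum h) hn'.le).trans_eq ?_
  have hcard : ((Finset.univ : Finset (Fin n)).offDiag.card : ℝ) = n * (n - 1) := by
    rw [Finset.offDiag_card, Finset.card_univ, Fintype.card_fin,
      Nat.cast_sub (Nat.le_mul_self n), Nat.cast_mul]
    ring
  rw [Finset.sum_const, nsmul_eq_mul, hcard]
  have := hn'.ne'
  generalize (n : ℝ) * (n - 1) = m at this
  field_simp

end Counting

section RemainderVariance

variable {d r n : ℕ} {H : Matrix (Fin r → Fin d) (Fin r → Fin d) ℂ} {σ : Matrix (Fin d) (Fin d) ℂ}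

lemma qUstat_eq (K : Matrix (Fin r → Fin d) (Fin r → Fin d) ℂ) (n : ℕ) :
    qUstat K n = (n.choose r : ℂ)⁻¹ •
      ∑ β : (Finset.univ : Finset (Fin n)).powersetCard r,
        ampl K β.1 (Finset.mem_powersetCard.mp β.2).2 := rfl

lemma qUstat_isHermitian (hH : H.IsHermitian) (n : ℕ) : (qUstat H n).IsHermitian := by
  rw [Matrix.IsHermitian, qUstat, Matrix.conjTranspose_smul, Matrix.conjTranspose_sum]
  simp only [ampl_eq_ampAlong, ampAlong_conjTranspose, hH.eq]
  simp

lemma trace_qUstat_mul_self_le (hr : 0 < r) (hn : 2 ≤ n)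
    (hS : ∀ τ : Equiv.Perm (Fin r), ampAlong τ H = H)
    (hH : H.IsHermitian) (hσ : σ.PosSemidef) (hσt : σ.trace = 1)
    {a b M : ℝ} (ha : ‖((tensorFam fun _ : Fin r => σ) * H).trace‖ ≤ a)
    (hb : ‖(σ * (condFirst hr σ H * condFirst hr σ H)).trace‖ ≤ b)
    (hM : ((tensorFam fun _ : Fin r => σ) * (H * H)).trace.re ≤ M) (hM0 : 0 ≤ M) :
    ‖((tensorFam fun _ : Fin n => σ) * (qUstat H n * qUstat H n)).trace‖ ≤
      a ^ 2 + b * (r ^ 2 / n) + M * (r ^ 4 / (n * (n - 1))) := by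
  have hn' : (0 : ℝ) < n * (n - 1) := by
    have : (2 : ℝ) ≤ n := by exact_mod_cast hn
    nlinarith
  have hn0 : (0 : ℝ) < n := by positivity
  have hb0 : 0 ≤ b := (norm_nonneg _).trans hb
  set P := (Finset.univ : Finset (Fin n)).powersetCard r with hP
  have hPc : P.card = n.choose r := by simp [hP]
  have key : ‖∑ β : P, ∑ β' : P, ((tensorFam fun _ : Fin n => σ) *
        (ampl H β.1 (Finset.mem_powersetCard.mp β.2).2 *
          ampl H β'.1 (Finset.mem_powersetCard.mp β'.2).2)).trace‖ ≤
      (n.choose r : ℝ) ^ 2 * (a ^ 2 + b * (r ^ 2 / n) + M * (r ^ 4 / (n * (n - 1)))) := by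
    calc _ ≤ ∑ β : P, ∑ β' : P, (a ^ 2 +
          b * ∑ k : Fin n, (if k ∈ β.1 then 1 else 0) * (if k ∈ β'.1 then 1 else 0) +
          M * ∑ p ∈ (Finset.univ : Finset (Fin n)).offDiag,
            (if {p.1, p.2} ⊆ β.1 then 1 else 0) * (if {p.1, p.2} ⊆ β'.1 then 1 else 0)) := by
          refine norm_sum_le_of_le _ fun β _ => norm_sum_le_of_le _ fun β' _ => ?_
          exact norm_trace_ampl_mul_ampl_le_sum hr hS hH hσ hσt ha hb hM hM0 _ _
      _ = ∑ β ∈ P, ∑ β' ∈ P, (a ^ 2 +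
          b * ∑ k : Fin n, (if k ∈ β then 1 else 0) * (if k ∈ β' then 1 else 0) +
          M * ∑ p ∈ (Finset.univ : Finset (Fin n)).offDiag,
            (if {p.1, p.2} ⊆ β then 1 else 0) * (if {p.1, p.2} ⊆ β' then 1 else 0)) := by
          rw [← Finset.sum_coe_sort P]
          refine Finset.sum_congr rfl fun β _ => ?_
          rw [← Finset.sum_coe_sort P]
      _ = (n.choose r : ℝ) ^ 2 * a ^ 2 + b * ∑ k : Fin n, ({β ∈ P | k ∈ β}.card : ℝ) ^ 2 +
          M * ∑ p ∈ (Finset.univ : Finset (Fin n)).offDiag,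
            ({β ∈ P | {p.1, p.2} ⊆ β}.card : ℝ) ^ 2 := by
          simp only [Finset.sum_add_distrib, ← Finset.mul_sum]
          rw [sum_sum_sum_mul_indicator, sum_sum_sum_mul_indicator]
          simp only [Finset.sum_const, nsmul_eq_mul, hPc]
          ring
      _ ≤ _ := by
          have h1 := sum_sq_card_filter_mem_powersetCard (n := n) hr
          have h2 := sum_sq_card_filter_pair_powersetCard_le (r := r) hn
          rw [← hP] at h1 h2
          rw [mul_comm, ← eq_div_iff hn0.ne'] at h1
          rw [mul_comm, ← le_div_iff₀ hn'] at h2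
          rw [h1]
          refine (add_le_add_right (mul_le_mul_of_nonneg_left h2 hM0) _).trans_eq ?_
          ring
  have e : ((tensorFam fun _ : Fin n => σ) * (qUstat H n * qUstat H n)).trace =
      ((n.choose r : ℂ)⁻¹) ^ 2 * ∑ β : P, ∑ β' : P, ((tensorFam fun _ : Fin n => σ) *
        (ampl H β.1 (Finset.mem_powersetCard.mp β.2).2 *
          ampl H β'.1 (Finset.mem_powersetCard.mp β'.2).2)).trace := by
    rw [qUstat_eq, smul_mul_smul_comm, mul_smul_comm, Matrix.trace_smul, Finset.sum_mul_sum,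
      Finset.mul_sum, Matrix.trace_sum, smul_eq_mul, pow_two]
    simp only [Finset.mul_sum, Matrix.trace_sum]
    rfl
  rw [e, norm_mul]
  refine (mul_le_mul_of_nonneg_left key (norm_nonneg _)).trans ?_
  rw [← mul_assoc]
  refine mul_le_of_le_one_left ?_ ?_
  · have h3 := hn'.le
    positivity
  · rw [norm_pow, norm_inv, Complex.norm_natCast, ← mul_pow]
    exact pow_le_one₀ (by positivity) (inv_mul_le_one)

end RemainderVariance

/-! ### The remainder of the Hoeffding decomposition -/

section Remainder

variable {d r : ℕ} (hr : 0 < r)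

lemma sum_siteOp_orderEmbOfFin {n : ℕ} (β : Finset (Fin n)) (hβ : β.card = r)
    (a : Matrix (Fin d) (Fin d) ℂ) :
    ∑ j, siteOp (β.orderEmbOfFin hβ j) a = ∑ i ∈ β, siteOp i a := by
  conv_rhs => rw [← Finset.image_orderEmbOfFin_univ β hβ]
  rw [Finset.sum_image fun _ _ _ _ h => (β.orderEmbOfFin hβ).injective h]

lemma qUstat_higherHoef {n : ℕ} (hn : 0 < n) (hrn : r ≤ n) (ρ : Matrix (Fin d) (Fin d) ℂ)
    (K : Matrix (Fin r → Fin d) (Fin r → Fin d) ℂ) :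
    qUstat (higherHoef hr ρ K) n =
      qUstat K n - ((tensorFam fun _ : Fin r => ρ) * K).trace • 1 -
        ((r : ℂ) / n) • ∑ i, siteOp i (firstHoef hr ρ K) := by
  have hN : (n.choose r : ℂ) ≠ 0 := by exact_mod_cast (Nat.choose_pos hrn).ne'
  have hn' : (n : ℂ) ≠ 0 := by exact_mod_cast hn.ne'
  have h1 : ∑ β ∈ (Finset.univ : Finset (Fin n)).powersetCard r,
      ∑ i ∈ β, siteOp i (firstHoef hr ρ K) =
      ((r : ℂ) * n.choose r / n) • ∑ i, siteOp i (firstHoef hr ρ K) := by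
    rw [Finset.sum_comm' (t' := Finset.univ)
      (s' := fun i => {β ∈ (Finset.univ : Finset (Fin n)).powersetCard r | i ∈ β}) (by simp),
      Finset.smul_sum]
    refine Finset.sum_congr rfl fun i _ => ?_
    rw [Finset.sum_const, ← Nat.cast_smul_eq_nsmul ℂ]
    congr 1
    rw [eq_div_iff hn', mul_comm]
    exact_mod_cast mul_card_filter_mem_powersetCard hr i
  rw [qUstat, qUstat]
  simp only [ampl_eq_ampAlong, ampAlong_higherHoef hr (RelEmbedding.injective _),
    sum_siteOp_orderEmbOfFin, Finset.sum_sub_distrib, smul_sub]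
  rw [Finset.sum_attach _ fun β : Finset (Fin n) => ∑ i ∈ β, siteOp i (firstHoef hr ρ K), h1,
    Finset.sum_const, Finset.card_attach, Finset.card_powersetCard, Finset.card_univ,
    Fintype.card_fin, ← Nat.cast_smul_eq_nsmul ℂ, smul_smul, smul_smul, inv_mul_cancel₀ hN,
    one_mul, smul_smul]
  congr 2
  field_simp

variable {A ρ : Matrix (Fin d) (Fin d) ℂ} (hA : A.IsHermitian)
  {H : Matrix (Fin r → Fin d) (Fin r → Fin d) ℂ}

lemma hasDerivAt_trace_evolState_mul (hS : ∀ τ : Equiv.Perm (Fin r), ampAlong τ H = H)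
    (hH : condFirst hr ρ H = 0) :
    HasDerivAt (fun s => ((tensorFam fun _ : Fin r => evolState hA ρ s) * H).trace) 0 0 := by
  obtain ⟨ρ', hρ'⟩ := exists_hasEntryDerivAt_evolState hA (ρ := ρ) 0
  have h := ((hasEntryDerivAt_tensorFam fun _ : Fin r => hρ').mul
    (hasEntryDerivAt_const H 0)).trace
  refine h.congr_deriv ?_
  rw [mul_zero, add_zero, Finset.sum_mul, Matrix.trace_sum]
  refine Finset.sum_eq_zero fun i _ => ?_
  rw [trace_tensorFam_update_mul hS hr, evolState_zero, hH, mul_zero, Matrix.trace_zero]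

lemma tendsto_evolState : Tendsto (evolState hA ρ) (𝓝 0) (𝓝 ρ) := by
  obtain ⟨ρ', hρ'⟩ := exists_hasEntryDerivAt_evolState hA (ρ := ρ) 0
  refine tendsto_pi_nhds.2 fun i => tendsto_pi_nhds.2 fun j => ?_
  have h := (hρ' i j).continuousAt.tendsto
  rwa [evolState_zero] at h

lemma continuous_tensorFam {X : Type*} [TopologicalSpace X] {n : ℕ}
    {F : Fin n → X → Matrix (Fin d) (Fin d) ℂ} (hF : ∀ i, Continuous (F i)) :
    Continuous fun x => tensorFam fun i => F i x :=
  continuous_matrix fun x y =>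
    continuous_finsetProd Finset.univ fun i _ => (hF i).matrix_elem (x i) (y i)

lemma continuous_condFirst : Continuous fun σ : Matrix (Fin d) (Fin d) ℂ => condFirst hr σ H := by
  refine continuous_matrix fun x y => ?_
  simp only [condFirst_apply]
  refine ((continuous_tensorFam fun i => ?_).matrix_mul continuous_const).matrix_trace
  by_cases h : i = ⟨0, hr⟩
  · subst h
    simpa using continuous_const
  · simpa [h] using continuous_id'

lemma eventually_evolState_bounds (hS : ∀ τ : Equiv.Perm (Fin r), ampAlong τ H = H)
    (hH : condFirst hr ρ H = 0) {ε : ℝ} (hε : 0 < ε) :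
    ∀ᶠ s in 𝓝 0, ‖((tensorFam fun _ : Fin r => evolState hA ρ s) * H).trace‖ ≤ ε * |s| ∧
      ‖(evolState hA ρ s * (condFirst hr (evolState hA ρ s) H *
        condFirst hr (evolState hA ρ s) H)).trace‖ ≤ ε ∧
      ((tensorFam fun _ : Fin r => evolState hA ρ s) * (H * H)).trace.re ≤
        |((tensorFam fun _ : Fin r => ρ) * (H * H)).trace.re| + 1 := by
  refine .and ?_ (.and ?_ ?_)
  · have h := (hasDerivAt_trace_evolState_mul hr hA hS hH).isLittleO
    have h0 : ((tensorFam fun _ : Fin r => evolState hA ρ 0) * H).trace = 0 := by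
      rw [evolState_zero, ← trace_mul_condFirst_self hr, hH, mul_zero, Matrix.trace_zero]
    simpa [h0] using h.def hε
  · have hc : Continuous fun σ : Matrix (Fin d) (Fin d) ℂ =>
        ‖(σ * (condFirst hr σ H * condFirst hr σ H)).trace‖ :=
      (continuous_id.matrix_mul ((continuous_condFirst hr).matrix_mul
        (continuous_condFirst hr))).matrix_trace.norm
    have h := (hc.tendsto ρ).comp (tendsto_evolState hA)
    simp only [hH, mul_zero, Matrix.trace_zero, norm_zero] at h
    exact (h.eventually_lt_const hε).mono fun _ h => h.le
  · have hc : Continuous fun σ : Matrix (Fin d) (Fin d) ℂ =>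
        ((tensorFam fun _ : Fin r => σ) * (H * H)).trace.re :=
      Complex.continuous_re.comp ((continuous_tensorFam fun _ => continuous_id).matrix_mul
        continuous_const).matrix_trace
    have h := (hc.tendsto ρ).comp (tendsto_evolState hA)
    exact (h.eventually_lt_const ((le_abs_self _).trans_lt (lt_add_one _))).mono fun _ h => h.le

/-- The characteristic function of a perturbation of `n ^ (-1/2) ∑ A` by a degenerate
U-statistic is asymptotically that of the unperturbed sum. -/
lemma tendsto_trace_evol_sub_prodEvol (hρ : ρ.PosSemidef) (hρt : ρ.trace = 1)
    (hS : ∀ τ : Equiv.Perm (Fin r), ampAlong τ H = H) (hH : H.IsHermitian)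
    (hH0 : condFirst hr ρ H = 0)
    {S : (n : ℕ) → Matrix (Fin n → Fin d) (Fin n → Fin d) ℂ} (hSn : ∀ n, (S n).IsHermitian)
    (hD : ∀ᶠ n : ℕ in atTop, S n - (((√n)⁻¹ : ℝ) : ℂ) • ∑ i, siteOp i A =
      ((√n : ℝ) : ℂ) • qUstat H n) (t : ℝ) :
    Tendsto (fun n : ℕ => ((tensorFam fun _ : Fin n => ρ) * evol (hSn n) t).trace -
      ((tensorFam fun _ : Fin n => ρ) * prodEvol hA n (√n)⁻¹ t).trace) atTop (𝓝 0) := by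
  rw [Metric.tendsto_nhds]
  intro δ' hδ'
  obtain ⟨δ, hδ, hδt⟩ : ∃ δ > 0, δ * |t| < δ' := by
    refine ⟨δ' / (|t| + 1), by positivity, ?_⟩
    rw [div_mul_eq_mul_div, div_lt_iff₀ (by positivity)]
    nlinarith
  set M := |((tensorFam fun _ : Fin r => ρ) * (H * H)).trace.re| + 1 with hM
  obtain ⟨ε, hεδ, hε⟩ : ∃ ε, ε ^ 2 * t ^ 2 + ε * r ^ 2 < δ ^ 2 / 2 ∧ 0 < ε := by
    have h : Tendsto (fun ε : ℝ => ε ^ 2 * t ^ 2 + ε * r ^ 2) (𝓝[>] 0) (𝓝 0) := by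
      have : Continuous fun ε : ℝ => ε ^ 2 * t ^ 2 + ε * r ^ 2 := by fun_prop
      simpa using (this.tendsto 0).mono_left nhdsWithin_le_nhds
    exact ((h.eventually_lt_const (by positivity)).and self_mem_nhdsWithin).exists
  obtain ⟨η, hη, hb⟩ := Metric.eventually_nhds_iff.1
    (eventually_evolState_bounds hr hA hS hH0 hε)
  have hlim1 : Tendsto (fun n : ℕ => (√n)⁻¹ * |t|) atTop (𝓝 0) := by
    rw [← zero_mul |t|]
    exact .mul_const _ (tendsto_inv_atTop_zero.comp <| Real.tendsto_sqrt_atTop.comp <|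
      tendsto_natCast_atTop_atTop)
  have hlim2 : Tendsto (fun n : ℕ => M * r ^ 4 / ((n : ℝ) - 1)) atTop (𝓝 0) :=
    (tendsto_atTop_add_const_right _ _ tendsto_natCast_atTop_atTop).const_div_atTop _
  filter_upwards [hD, hlim1.eventually_lt_const hη,
    hlim2.eventually_lt_const (half_pos (pow_pos hδ 2)), eventually_ge_atTop 2] with n hDn h1 h2 hn
  have hn0 : (0 : ℝ) < n := by positivity
  have hn1 : (0 : ℝ) < n - 1 := by
    have : (2 : ℝ) ≤ n := by exact_mod_cast hn
    linarith
  rw [dist_zero_right]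
  refine (norm_trace_evol_sub_le (T := (((√n)⁻¹ : ℝ) : ℂ) • ∑ i, siteOp i A) (hSn n)
    (tensorFam_posSemidef hρ) (by simp [tensorFam_trace, hρt])
    (prodEvol_zero hA n _) (fun s => hasEntryDerivAt_prodEvol hA n _ s) hδ.le
    fun u hu => ?_).trans_lt hδt
  have hs : |(√n)⁻¹ * u| ≤ (√n)⁻¹ * |t| := by
    rw [abs_mul, abs_of_nonneg (by positivity : (0 : ℝ) ≤ (√n)⁻¹)]
    gcongr
  obtain ⟨b1, b2, b3⟩ := hb (y := (√n)⁻¹ * u) (by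
    rw [dist_zero_right, Real.norm_eq_abs]; exact hs.trans_lt h1)
  have hQ := trace_qUstat_mul_self_le (n := n) hr hn hS hH
    (evolState_posSemidef hA hρ ((√n)⁻¹ * u)) ((evolState_trace hA _).trans hρt)
    (b1.trans (mul_le_mul_of_nonneg_left hs hε.le)) b2 b3 (by positivity)
  rw [trace_mul_conj_prodEvol, hDn, Matrix.conjTranspose_smul, (qUstat_isHermitian hH n).eq,
    smul_mul_smul_comm, mul_smul_comm, Matrix.trace_smul]
  refine (Complex.re_le_norm _).trans ?_
  rw [norm_smul]
  have hsq : ‖star ((√n : ℝ) : ℂ) * ((√n : ℝ) : ℂ)‖ = n := by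
    rw [norm_mul, norm_star, Complex.norm_real, Real.norm_eq_abs, abs_of_nonneg (by positivity),
      Real.mul_self_sqrt hn0.le]
  rw [hsq]
  refine (mul_le_mul_of_nonneg_left hQ hn0.le).trans ?_
  have e : (n : ℝ) * ((ε * ((√n)⁻¹ * |t|)) ^ 2 + ε * (r ^ 2 / n) + M * (r ^ 4 / (n * (n - 1)))) =
      ε ^ 2 * t ^ 2 + ε * r ^ 2 + M * r ^ 4 / (n - 1) := by
    rw [mul_pow, mul_pow, inv_pow, Real.sq_sqrt hn0.le, sq_abs]
    field_simp
  rw [e]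
  linarith

end Remainder

/-- **Asymptotic normality of non-degenerate quantum U-statistics** (convergence in
distribution of the measurement outcomes). -/
theorem stmt14 {d r : ℕ} (hr : 0 < r) (ρ : Matrix (Fin d) (Fin d) ℂ)
    (hρ : ρ.PosDef) (hρtr : ρ.trace = 1)
    (K : Matrix (Fin r → Fin d) (Fin r → Fin d) ℂ)
    (hherm : K.IsHermitian)
    (hsym : ∀ (τ : Equiv.Perm (Fin r)) (x y : Fin r → Fin d), K (x ∘ τ) (y ∘ τ) = K x y)
    (θ : ℂ) (hθ : θ = ((tensorFam fun _ : Fin r => ρ) * K).trace)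
    (ξ₁ : ℂ) (hξ : ξ₁ = (ρ * (firstHoef hr ρ K * firstHoef hr ρ K)).trace)
    (hnondeg : firstHoef hr ρ K ≠ 0) :
    ∀ f : BoundedContinuousFunction ℝ ℝ,
      Tendsto
        (fun n => ((tensorFam fun _ : Fin n => ρ) *
          cfc (fun x : ℝ => f x)
            ((Real.sqrt n) •
              (qUstat K n - θ • (1 : Matrix (Fin n → Fin d) (Fin n → Fin d) ℂ)))).trace)
        atTop
        (𝓝 ((∫ x, f x ∂(gaussianReal 0 (((r : ℝ) ^ 2 * ξ₁.re).toNNReal)) : ℝ) : ℂ)) := by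
  intro f
  have hS : ∀ τ : Equiv.Perm (Fin r), ampAlong τ K = K := fun τ => by
    ext x y
    rw [ampAlong_perm_apply, hsym]
  have hρ' := hρ.posSemidef
  have hK1 := firstHoef_isHermitian hr hρ' hherm
  have hA : ((r : ℂ) • firstHoef hr ρ K).IsHermitian := by
    rw [Matrix.IsHermitian, Matrix.conjTranspose_smul, hK1.eq]
    simp
  have hθ' : star θ = θ := by
    rw [hθ, trace_mul_eq_re (tensorFam_posSemidef hρ').1 hherm]
  have hR : ∀ n : ℕ, (tensorFam fun _ : Fin n => ρ).PosSemidef := fun n => tensorFam_posSemidef hρ'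
  have hRt : ∀ n : ℕ, (tensorFam fun _ : Fin n => ρ).trace = 1 := fun n => by
    simp [tensorFam_trace, hρtr]
  have hSn : ∀ n : ℕ, ((Real.sqrt n) •
      (qUstat K n - θ • (1 : Matrix (Fin n → Fin d) (Fin n → Fin d) ℂ))).IsHermitian := fun n => by
    rw [Matrix.IsHermitian, Matrix.conjTranspose_smul, Matrix.conjTranspose_sub,
      Matrix.conjTranspose_smul, (qUstat_isHermitian hherm n).eq, hθ', Matrix.conjTranspose_one,
      star_trivial]
  have hξ' := (integral_sq_measLaw hK1 hρ').trans hξ.symm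
  have hξ0 : 0 ≤ ξ₁.re := by
    rw [← hξ', Complex.ofReal_re]
    exact integral_nonneg fun x => sq_nonneg x
  set v : ℝ := (r : ℝ) ^ 2 * ξ₁.re with hv
  have hv0 : 0 ≤ v := by positivity
  have hvA : (ρ * (((r : ℂ) • firstHoef hr ρ K) * ((r : ℂ) • firstHoef hr ρ K))).trace = v := by
    rw [smul_mul_smul_comm, mul_smul_comm, Matrix.trace_smul, ← hξ, hv, ← hξ', Complex.ofReal_re]
    push_cast
    rw [smul_eq_mul, pow_two]
  have hmean : (ρ * ((r : ℂ) • firstHoef hr ρ K)).trace = 0 := by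
    rw [mul_smul_comm, Matrix.trace_smul, trace_mul_firstHoef hr hρtr, smul_zero]
  have hdec : ∀ᶠ n : ℕ in atTop, (Real.sqrt n) •
      (qUstat K n - θ • (1 : Matrix (Fin n → Fin d) (Fin n → Fin d) ℂ)) -
      (((√n)⁻¹ : ℝ) : ℂ) • ∑ i, siteOp i ((r : ℂ) • firstHoef hr ρ K) =
      ((√n : ℝ) : ℂ) • qUstat (higherHoef hr ρ K) n := by
    filter_upwards [eventually_ge_atTop r] with n hn
    have hn0 : 0 < n := hr.trans_le hn
    have hs : ((√n : ℝ) : ℂ) ≠ 0 := by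
      rw [Complex.ofReal_ne_zero]
      positivity
    have hss : ((√n : ℝ) : ℂ) * ((√n : ℝ) : ℂ) = n := by
      rw [← Complex.ofReal_mul, Real.mul_self_sqrt n.cast_nonneg, Complex.ofReal_natCast]
    have hsite : ∀ i : Fin n, siteOp i ((r : ℂ) • firstHoef hr ρ K) =
        (r : ℂ) • siteOp i (firstHoef hr ρ K) := fun i => tensorFam_update_smul i _ _ _
    rw [qUstat_higherHoef hr hn0 hn, ← hθ, smul_sub _ (_ - _)]
    congr 1
    simp only [hsite, ← Finset.smul_sum, smul_smul]
    congr 1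
    rw [← hss]
    push_cast
    field_simp
  have hchar : ∀ t : ℝ, Tendsto
      (fun n : ℕ => charFun (measLaw (hSn n) (tensorFam fun _ : Fin n => ρ)) t) atTop
      (𝓝 (charFun (gaussianReal 0 v.toNNReal) t)) := fun t => by
    have h1 := tendsto_trace_evol_sub_prodEvol hr hA hρ' hρtr
      (ampAlong_perm_higherHoef hr hS) (higherHoef_isHermitian hr hρ' hherm)
      (condFirst_higherHoef hr hρtr) hSn hdec t
    have h2 := h1.add (tendsto_trace_evol_pow hA hρ' hρtr hmean hvA t)
    simp only [trace_mul_prodEvol, sub_add_cancel, zero_add] at h2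
    simp only [charFun_measLaw (hSn _) (hR _)]
    rw [charFun_gaussianReal]
    convert h2 using 3
    rw [Real.coe_toNNReal _ hv0]
    simp
  let μ : ℕ → ProbabilityMeasure ℝ := fun n =>
    ⟨measLaw (hSn n) (tensorFam fun _ : Fin n => ρ),
      isProbabilityMeasure_measLaw (hSn n) (hR n) (hRt n)⟩
  let γ : ProbabilityMeasure ℝ := ⟨gaussianReal 0 v.toNNReal, inferInstance⟩
  have hw : Tendsto μ atTop (𝓝 γ) := ProbabilityMeasure.tendsto_iff_tendsto_charFun.2 hchar
  have hf := ProbabilityMeasure.tendsto_iff_forall_integral_tendsto.1 hw f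
  simp only [trace_mul_cfc (hSn _) (hR _)]
  exact (Complex.continuous_ofReal.tendsto _).comp hf
end
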